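/- arXiv:1610.02566 — 2 statements merged into one kernel-verified Lean document; each statement's English description precedes it below -/
import Mathlib

section
/- Consider the off-line equidistant sample transmission problem for low-pass c.w.s.s. signals: minimize ε̄(B) = tr[((s/P_x)·I_s + (1/σ_w²)·U_s† B U_s)^{−1}] over N×N diagonal matrices B = diag(b_1,…,b_N) with b_t ≥ 0 if t = Q(k−1) + t_d + 1 for some k ∈ {1,…,s} and b_t = 0 otherwise, subject to Σ_{t=1}^{N} b_t·σ_{x,t}² = E_tot. Then the allocation b_t = (E_tot/P_x)·(N/s) at the supported indices t = Q(k−1)+t_d+1 (and b_t = 0 otherwise) is feasible and optimal, and the minimum value equals ε_{de} = P_x / (1 + E_tot/(s·σ_w²)). -/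
open Matrix Finset

/-- The `n×n` DFT matrix, `[F^n]_{tk} = (1/√n)·exp(−j·(2π/n)·(t−1)(k−1))` (0-based indices). -/
noncomputable def dftMatrix (n : ℕ) : Matrix (Fin n) (Fin n) ℂ :=
  Matrix.of fun t k =>
    (1 / (Real.sqrt n : ℂ)) *
      Complex.exp (-Complex.I * ((2 * Real.pi / n : ℝ) : ℂ) * (t.1 : ℂ) * (k.1 : ℂ))

/-- The (0-based) index `Q·k + t_d` inside `Fin (s·Q)`. -/
def posIdx (s Q : ℕ) (td : Fin Q) (k : Fin s) : Fin (s * Q) := finProdFinEquiv (k, td)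

/-- Squared Euclidean norm of the (conjugate-transposed) `i`-th row of `Us`. -/
noncomputable def rowNormSq {N s : ℕ} (Us : Matrix (Fin N) (Fin s) ℂ) (i : Fin N) : ℝ :=
  ∑ j, ‖Us i j‖ ^ 2

/-!
For *every* matrix `U` with rows `u_tᴴ` and every `b ≥ 0`, the matrix
`M = a • 1 + w⁻¹ • Uᴴ diag(b) U` has trace `s a + w⁻¹ ∑ b_t ‖u_t‖²`, which the energy constraint
fixes. Since `s² ≤ tr M · tr M⁻¹`, with equality when `M` is a scalar matrix, it suffices to find an
allocation for which `Uᴴ diag(b) U` is scalar. Constant weights on `Q k + t_d` do this for the first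
`s` columns of the DFT, because the corresponding rows form `Q^(-1/2)` times a unitary matrix.
The energy of that allocation is then read off from `tr (Uᴴ diag(b) U)`.
-/

section TraceInverse

open scoped ComplexOrder

variable {𝕜 n : Type*} [RCLike 𝕜] [Fintype n] [DecidableEq n]

lemma sq_card_le_trace_mul_trace_inv_of_posDef {A : Matrix n n 𝕜} (hA : A.PosDef) :
    (Fintype.card n : ℝ) ^ 2 ≤ RCLike.re A.trace * RCLike.re A⁻¹.trace := by
  -- Since `(A - c) A⁻¹ (A - c)ᴴ` is positive, the quadratic `c² tr A⁻¹ - 2 c n + tr A` in `c` is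
  -- nonnegative; the claim is that its discriminant is nonpositive.
  have hdet : IsUnit A.det := A.isUnit_iff_isUnit_det.mp hA.isUnit
  have expand (c : ℝ) : (A - (c : 𝕜) • 1) * A⁻¹ * (A - (c : 𝕜) • 1)ᴴ =
      A - ((2 * c : ℝ) : 𝕜) • 1 + ((c * c : ℝ) : 𝕜) • A⁻¹ := by
    have hstar : (A - (c : 𝕜) • 1)ᴴ = A - (c : 𝕜) • 1 := by simp [hA.isHermitian.eq]
    rw [hstar]
    simp only [sub_mul, mul_sub, A.mul_nonsing_inv hdet, A.nonsing_inv_mul hdet, one_mul, mul_one,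
      smul_mul_assoc, mul_smul_comm, RCLike.ofReal_mul, RCLike.ofReal_ofNat]
    module
  have quadratic_nonneg (c : ℝ) : 0 ≤ RCLike.re A⁻¹.trace * (c * c) +
      -2 * Fintype.card n * c + RCLike.re A.trace := by
    have h := (RCLike.nonneg_iff.mp
      (hA.inv.posSemidef.mul_mul_conjTranspose_same (A - (c : 𝕜) • 1)).trace_nonneg).1
    rw [expand] at h
    simp only [trace_add, trace_sub, trace_smul, trace_one, smul_eq_mul, map_add, map_sub,
      RCLike.re_ofReal_mul, RCLike.natCast_re] at h
    linarith
  have := discrim_le_zero quadratic_nonneg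
  rw [discrim] at this
  linarith

end TraceInverse

section LinearEstimation

open scoped ComplexOrder

variable {m n : Type*} [Fintype m] [DecidableEq m]

lemma conjTranspose_mul_diagonal_mul_apply {R : Type*} [NonUnitalSemiring R] [StarRing R]
    (U : Matrix m n R) (d : m → R) (i j : n) :
    (Uᴴ * diagonal d * U) i j = ∑ t, star (U t i) * d t * U t j := by
  rw [mul_apply]
  simp only [mul_diagonal, conjTranspose_apply]

lemma conjTranspose_mul_diagonal_mul_eq_submatrix {R ι : Type*} [NonUnitalSemiring R] [StarRing R]
    [Fintype ι] [DecidableEq ι] (U : Matrix m n R) {e : ι → m} (he : Function.Injective e)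
    {d : m → R} (hd : ∀ t ∉ Set.range e, d t = 0) :
    Uᴴ * diagonal d * U = (U.submatrix e id)ᴴ * diagonal (d ∘ e) * U.submatrix e id := by
  ext i j
  rw [conjTranspose_mul_diagonal_mul_apply, conjTranspose_mul_diagonal_mul_apply]
  exact (Fintype.sum_of_injective e he _ _ (fun t ht => by simp [hd t ht]) fun _ => rfl).symm

lemma trace_conjTranspose_mul_diagonal_mul [Fintype n] (U : Matrix m n ℂ) (b : m → ℝ) :
    (Uᴴ * diagonal (fun t => (b t : ℂ)) * U).trace = ((∑ t, b t * ∑ j, ‖U t j‖ ^ 2 : ℝ) : ℂ) := by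
  calc _ = ∑ j, ∑ t, star (U t j) * b t * U t j :=
        sum_congr rfl fun j _ => conjTranspose_mul_diagonal_mul_apply U _ j j
    _ = ∑ t, ∑ j, star (U t j) * b t * U t j := sum_comm
    _ = ∑ t, ∑ j, (b t : ℂ) * (‖U t j‖ : ℂ) ^ 2 := by
        simp only [← Complex.conj_mul', Complex.star_def, mul_left_comm, mul_assoc]
    _ = _ := by
        push_cast
        simp only [mul_sum]

variable [DecidableEq n]

/-- The inverse error covariance of the linear MMSE estimate of coefficients with prior covariance
`a⁻¹ • 1`, observed in white noise of variance `w` through the rows of `U` amplified in power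
by `b`. -/
noncomputable def errorPrecision (U : Matrix m n ℂ) (a w : ℝ) (b : m → ℝ) : Matrix n n ℂ :=
  (a : ℂ) • 1 + (w : ℂ)⁻¹ • (Uᴴ * diagonal (fun t => (b t : ℂ)) * U)

variable {U : Matrix m n ℂ} {a w : ℝ} {b : m → ℝ}

lemma posDef_errorPrecision [Finite n] (ha : 0 < a) (hw : 0 ≤ w) (hb : ∀ t, 0 ≤ b t) :
    (errorPrecision U a w b).PosDef := by
  have hdiag : (diagonal fun t => (b t : ℂ)).PosSemidef :=
    PosSemidef.diagonal fun t => Complex.zero_le_real.mpr (hb t)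
  have hw' : (0 : ℂ) ≤ (w : ℂ)⁻¹ := by exact_mod_cast inv_nonneg.mpr hw
  exact (PosDef.one.smul (Complex.zero_lt_real.mpr ha)).add_posSemidef
    ((hdiag.conjTranspose_mul_mul_same U).smul hw')

variable [Fintype n]

/-- The mean-square error `ε̄` of the linear MMSE estimate, i.e. the trace of the error covariance;
that trace is real, and is encoded by its real part. -/
noncomputable def meanSquareError (U : Matrix m n ℂ) (a w : ℝ) (b : m → ℝ) : ℝ :=
  (errorPrecision U a w b)⁻¹.trace.re

lemma re_trace_errorPrecision :
    (errorPrecision U a w b).trace.re =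
      Fintype.card n * a + w⁻¹ * ∑ t, b t * ∑ j, ‖U t j‖ ^ 2 := by
  rw [errorPrecision, trace_add, trace_smul, trace_smul, trace_one,
    trace_conjTranspose_mul_diagonal_mul, smul_eq_mul, smul_eq_mul, ← Complex.ofReal_inv,
    Complex.add_re, Complex.re_ofReal_mul, Complex.re_ofReal_mul, Complex.natCast_re,
    Complex.ofReal_re, mul_comm a]

lemma sq_card_div_le_meanSquareError (ha : 0 < a) (hw : 0 ≤ w) (hb : ∀ t, 0 ≤ b t) :
    (Fintype.card n : ℝ) ^ 2 / (Fintype.card n * a + w⁻¹ * ∑ t, b t * ∑ j, ‖U t j‖ ^ 2) ≤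
      meanSquareError U a w b := by
  have hM : (errorPrecision U a w b).PosDef := posDef_errorPrecision ha hw hb
  rw [← re_trace_errorPrecision]
  refine div_le_of_le_mul₀ (Complex.nonneg_iff.mp hM.posSemidef.trace_nonneg).1
    (Complex.nonneg_iff.mp hM.inv.posSemidef.trace_nonneg).1 ?_
  rw [mul_comm]
  exact sq_card_le_trace_mul_trace_inv_of_posDef hM

variable {β : ℝ}

lemma sum_mul_sq_norm_of_eq_smul_one
    (hU : Uᴴ * diagonal (fun t => (b t : ℂ)) * U = (β : ℂ) • 1) :
    ∑ t, b t * ∑ j, ‖U t j‖ ^ 2 = Fintype.card n * β := by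
  have h := trace_conjTranspose_mul_diagonal_mul U b
  rw [hU, trace_smul, trace_one, smul_eq_mul, mul_comm] at h
  exact_mod_cast h.symm

lemma meanSquareError_of_eq_smul_one
    (hU : Uᴴ * diagonal (fun t => (b t : ℂ)) * U = (β : ℂ) • 1) (hβ : a + β / w ≠ 0) :
    meanSquareError U a w b = Fintype.card n / (a + β / w) := by
  have hM : errorPrecision U a w b = ((a + β / w : ℝ) : ℂ) • 1 := by
    rw [errorPrecision, hU, smul_smul, ← add_smul, inv_mul_eq_div]
    push_cast
    rfl
  have hinv : (errorPrecision U a w b)⁻¹ = (((a + β / w)⁻¹ : ℝ) : ℂ) • 1 := by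
    refine inv_eq_right_inv ?_
    rw [hM, smul_mul_smul_comm, one_mul, ← Complex.ofReal_mul, mul_inv_cancel₀ hβ,
      Complex.ofReal_one, one_smul]
  rw [meanSquareError, hinv, trace_smul, trace_one, smul_eq_mul, Complex.re_ofReal_mul,
    Complex.natCast_re, inv_mul_eq_div]

end LinearEstimation

section DFT

lemma sum_pow_div_pow_of_isPrimitiveRoot {K : Type*} [Field K] {ζ : K} {s : ℕ}
    (hζ : IsPrimitiveRoot ζ s) (i j : Fin s) :
    ∑ k : Fin s, (ζ ^ j.1 / ζ ^ i.1) ^ k.1 = if i = j then (s : K) else 0 := by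
  have hζ0 : ζ ≠ 0 := hζ.ne_zero i.pos.ne'
  rw [Fin.sum_univ_eq_sum_range fun k => (ζ ^ j.1 / ζ ^ i.1) ^ k]
  split_ifs with hij
  · simp [hij, div_self (pow_ne_zero _ hζ0)]
  · have hne : ζ ^ j.1 / ζ ^ i.1 ≠ 1 := fun h =>
      hij (Fin.ext (hζ.pow_inj j.2 i.2 ((div_eq_one_iff_eq (pow_ne_zero _ hζ0)).mp h)).symm)
    rw [geom_sum_eq hne, div_pow, pow_right_comm, pow_right_comm ζ i.1, hζ.pow_eq_one]
    simp

/-- The root of unity `exp (-2πj/N)` whose powers are, up to scaling, the entries of the DFT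
matrix. -/
noncomputable def dftRoot (N : ℕ) : ℂ :=
  Complex.exp (-Complex.I * ((2 * Real.pi / N : ℝ) : ℂ))

lemma isPrimitiveRoot_dftRoot {N : ℕ} (hN : N ≠ 0) : IsPrimitiveRoot (dftRoot N) N := by
  have h : dftRoot N = (Complex.exp (2 * Real.pi * Complex.I / N))⁻¹ := by
    rw [dftRoot, ← Complex.exp_neg]
    congr 1
    push_cast
    ring
  exact h ▸ (Complex.isPrimitiveRoot_exp N hN).inv

lemma star_dftRoot (N : ℕ) : star (dftRoot N) = (dftRoot N)⁻¹ := by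
  rw [dftRoot, Complex.star_def, ← Complex.exp_conj, ← Complex.exp_neg, map_mul, map_neg,
    Complex.conj_I, Complex.conj_ofReal, neg_mul, neg_mul, neg_neg]

lemma dftMatrix_apply {N : ℕ} (t k : Fin N) :
    dftMatrix N t k = (Real.sqrt N : ℂ)⁻¹ * (dftRoot N ^ k.1) ^ t.1 := by
  rw [dftMatrix, of_apply, one_div, dftRoot, ← Complex.exp_nat_mul, ← Complex.exp_nat_mul]
  congr 2
  ring

lemma star_dftMatrix_mul_dftMatrix {N : ℕ} (t i j : Fin N) :
    star (dftMatrix N t i) * dftMatrix N t j =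
      (N : ℂ)⁻¹ * (dftRoot N ^ j.1 / dftRoot N ^ i.1) ^ t.1 := by
  have hsqrt : (Real.sqrt N : ℂ) * Real.sqrt N = N := by
    exact_mod_cast Real.mul_self_sqrt N.cast_nonneg
  have hstar : star (Real.sqrt N : ℂ)⁻¹ = (Real.sqrt N : ℂ)⁻¹ := by simp
  rw [dftMatrix_apply, dftMatrix_apply, star_mul', star_pow, star_pow, star_dftRoot, hstar,
    mul_mul_mul_comm, ← mul_inv, hsqrt, div_pow, inv_pow, inv_pow, div_eq_inv_mul]

/-- The matrix `U_s` formed by the first `s` columns of the `N × N` DFT matrix. -/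
noncomputable def dftFirstColumns {s N : ℕ} (h : s ≤ N) : Matrix (Fin N) (Fin s) ℂ :=
  (dftMatrix N).submatrix id (Fin.castLE h)

variable {s Q : ℕ}

lemma posIdx_injective (td : Fin Q) : Function.Injective (posIdx s Q td) :=
  finProdFinEquiv.injective.comp (Prod.mk_left_injective td)

lemma conjTranspose_mul_self_submatrix_posIdx (h : s ≤ s * Q) (td : Fin Q) :
    ((dftFirstColumns h).submatrix (posIdx s Q td) id)ᴴ *
      (dftFirstColumns h).submatrix (posIdx s Q td) id = (Q : ℂ)⁻¹ • 1 := by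
  ext i j
  have hs : s ≠ 0 := i.pos.ne'
  have hN : s * Q ≠ 0 := mul_ne_zero hs td.pos.ne'
  have hζ : IsPrimitiveRoot (dftRoot (s * Q)) (s * Q) := isPrimitiveRoot_dftRoot hN
  have hζQ : IsPrimitiveRoot (dftRoot (s * Q) ^ Q) s :=
    hζ.pow (Nat.pos_of_ne_zero hN) (mul_comm s Q)
  set z : ℂ := dftRoot (s * Q) ^ j.1 / dftRoot (s * Q) ^ i.1 with hz
  have hzQ : z ^ Q = (dftRoot (s * Q) ^ Q) ^ j.1 / (dftRoot (s * Q) ^ Q) ^ i.1 := by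
    rw [hz, div_pow, pow_right_comm, pow_right_comm _ i.1]
  -- The offset `t_d` contributes only the common phase `z ^ t_d`.
  calc _ = ∑ k : Fin s, ((s * Q : ℕ) : ℂ)⁻¹ * z ^ (td.1 + Q * k.1) :=
        sum_congr rfl fun k _ => star_dftMatrix_mul_dftMatrix _ _ _
    _ = ((s * Q : ℕ) : ℂ)⁻¹ * z ^ td.1 * ∑ k : Fin s, (z ^ Q) ^ k.1 := by
        simp only [mul_sum, pow_add, pow_mul, mul_assoc]
    _ = ((s * Q : ℕ) : ℂ)⁻¹ * z ^ td.1 * if i = j then (s : ℂ) else 0 := by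
        rw [hzQ, sum_pow_div_pow_of_isPrimitiveRoot hζQ]
    _ = ((Q : ℂ)⁻¹ • (1 : Matrix (Fin s) (Fin s) ℂ)) i j := by
        rcases eq_or_ne i j with rfl | hij
        · have hz1 : z = 1 := div_self (pow_ne_zero _ (hζ.ne_zero hN))
          have hs' : (s : ℂ) ≠ 0 := Nat.cast_ne_zero.mpr hs
          simp [hz1, hs']
        · simp [hij]

/-- The allocation with constant weight `β` on the sampling positions `Q k + t_d` and zero
elsewhere. -/
def equidistantAllocation (s : ℕ) {Q : ℕ} (td : Fin Q) (β : ℝ) (i : Fin (s * Q)) : ℝ :=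
  if ∃ k : Fin s, i = posIdx s Q td k then β else 0

lemma equidistantAllocation_nonneg (td : Fin Q) {β : ℝ} (hβ : 0 ≤ β) (i : Fin (s * Q)) :
    0 ≤ equidistantAllocation s td β i :=
  ite_nonneg hβ le_rfl

lemma conjTranspose_mul_diagonal_equidistantAllocation_mul (h : s ≤ s * Q) (td : Fin Q) (β : ℝ) :
    (dftFirstColumns h)ᴴ * diagonal (fun t => (equidistantAllocation s td β t : ℂ)) *
      dftFirstColumns h = ((β / Q : ℝ) : ℂ) • 1 := by
  have hsupp : ∀ t ∉ Set.range (posIdx s Q td), (equidistantAllocation s td β t : ℂ) = 0 := by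
    intro t ht
    have : ¬ ∃ k, t = posIdx s Q td k := fun ⟨k, hk⟩ => ht ⟨k, hk.symm⟩
    simp [equidistantAllocation, this]
  have hconst : (fun t => (equidistantAllocation s td β t : ℂ)) ∘ posIdx s Q td =
      fun _ => (β : ℂ) :=
    funext fun k => congrArg _ (if_pos ⟨k, rfl⟩)
  rw [conjTranspose_mul_diagonal_mul_eq_submatrix _ (posIdx_injective td) hsupp, hconst,
    ← smul_one_eq_diagonal, mul_smul_comm, mul_one, smul_mul_assoc,
    conjTranspose_mul_self_submatrix_posIdx, smul_smul, ← div_eq_mul_inv]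
  push_cast
  rfl

end DFT

theorem stmt_5_general {s Q : ℕ} (hs : 0 < s) (td : Fin Q) {Px σw2 Etot : ℝ}
    (hPx : 0 < Px) (hσ : 0 < σw2) (hEtot : 0 ≤ Etot) :
    let U := dftFirstColumns (Nat.le_mul_of_pos_right s td.pos)
    let b0 := equidistantAllocation s td (Etot / Px * ((s * Q : ℕ) : ℝ) / s)
    ((∀ i, 0 ≤ b0 i) ∧ (∑ i, b0 i * (Px / s * rowNormSq U i) = Etot) ∧
      meanSquareError U (s / Px) σw2 b0 = Px / (1 + Etot / (s * σw2))) ∧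
    (∀ b : Fin (s * Q) → ℝ, (∀ i, 0 ≤ b i) → (∑ i, b i * (Px / s * rowNormSq U i) = Etot) →
      Px / (1 + Etot / (s * σw2)) ≤ meanSquareError U (s / Px) σw2 b) := by
  intro U b0
  have hs' : (0 : ℝ) < s := Nat.cast_pos.mpr hs
  have hQ : (0 : ℝ) < Q := Nat.cast_pos.mpr td.pos
  have energy_eq (b : Fin (s * Q) → ℝ) :
      ∑ i, b i * (Px / s * rowNormSq U i) = Px / s * ∑ i, b i * ∑ j, ‖U i j‖ ^ 2 := by
    simp only [rowNormSq, mul_sum, mul_left_comm]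
  have gram_eq : Uᴴ * diagonal (fun t => (b0 t : ℂ)) * U = ((Etot / Px : ℝ) : ℂ) • 1 := by
    rw [conjTranspose_mul_diagonal_equidistantAllocation_mul]
    congr 2
    push_cast
    field_simp
  refine ⟨⟨equidistantAllocation_nonneg td (by positivity), ?_, ?_⟩, fun b hb henergy => ?_⟩
  · rw [energy_eq, sum_mul_sq_norm_of_eq_smul_one gram_eq, Fintype.card_fin]
    field_simp
  · rw [meanSquareError_of_eq_smul_one gram_eq (by positivity), Fintype.card_fin]
    field_simp
  · have hsum : ∑ i, b i * ∑ j, ‖U i j‖ ^ 2 = s * Etot / Px := by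
      rw [← henergy, energy_eq]
      field_simp
    convert sq_card_div_le_meanSquareError (U := U) (div_pos hs' hPx) hσ.le hb using 1
    rw [hsum, Fintype.card_fin]
    field_simp

/-- Off-line equidistant sample transmission for low-pass c.w.s.s. signals: among diagonal `B`
supported on the positions `t = Q(k−1)+t_d+1` with nonnegative entries and total energy
`Σ_t b_t σ_{x,t}² = E_tot`, the allocation `b_t = (E_tot/P_x)·(N/s)` on the support is feasible
and optimal, with minimum value `P_x/(1 + E_tot/(s·σ_w²))`. -/
theorem stmt_5 (s Q : ℕ) (hs : 0 < s) (hQ : 0 < Q) (td : Fin Q)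
    (Us : Matrix (Fin (s * Q)) (Fin s) ℂ)
    (hUs : ∀ (i : Fin (s * Q)) (j : Fin s),
      Us i j = dftMatrix (s * Q) i ⟨j.1, lt_of_lt_of_le j.2 (Nat.le_mul_of_pos_right s hQ)⟩)
    (Px σw2 Etot : ℝ) (hPx : 0 < Px) (hσ : 0 < σw2) (hEtot : 0 ≤ Etot)
    (σx2 : Fin (s * Q) → ℝ) (hσx2 : ∀ i, σx2 i = Px / s * rowNormSq Us i)
    (errBar : (Fin (s * Q) → ℝ) → ℝ)
    (herrBar : ∀ b : Fin (s * Q) → ℝ, errBar b =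
      ((((s / Px : ℝ) : ℂ) • (1 : Matrix (Fin s) (Fin s) ℂ) +
        ((σw2 : ℝ) : ℂ)⁻¹ • (Usᴴ * Matrix.diagonal (fun t => ((b t : ℝ) : ℂ)) * Us))⁻¹).trace.re)
    (b0 : Fin (s * Q) → ℝ)
    (hb0 : ∀ i : Fin (s * Q),
      b0 i = if ∃ k : Fin s, i = posIdx s Q td k then Etot / Px * ((s * Q : ℕ) : ℝ) / s else 0) :
    ((∀ i, 0 ≤ b0 i) ∧ (∑ i, b0 i * σx2 i = Etot) ∧
      errBar b0 = Px / (1 + Etot / (s * σw2))) ∧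
    (∀ b : Fin (s * Q) → ℝ,
      (∀ i, 0 ≤ b i) → (∀ i, (¬ ∃ k : Fin s, i = posIdx s Q td k) → b i = 0) →
      (∑ i, b i * σx2 i = Etot) →
      Px / (1 + Etot / (s * σw2)) ≤ errBar b) := by
  obtain rfl : Us = dftFirstColumns (Nat.le_mul_of_pos_right s td.pos) := Matrix.ext hUs
  obtain rfl := funext hσx2
  obtain rfl := funext herrBar
  obtain rfl := funext hb0
  have h := stmt_5_general hs td hPx hσ hEtot
  exact ⟨h.1, fun b hb _ => h.2 b hb⟩
end

section
/- Under the energy-harvesting block-transmission model, for every r in the interval (0, 1/η_U], the smallest eigenvalue of the random matrix U_s† G U_s satisfies P( λ_min(U_s† G U_s) > μ_E·(s/P_x)·(1/η_U − r) ) ≥ 1 − f_bt(μ_I, ϱ_I, r), where μ_I = (1/η_L)·max{r_E − 1, 1}·min{Q·η_U, 1} and ϱ_I = (ϱ_E/μ_E²)·(1/η_L²)·(1/Q)·min{Q·η_U, 1}. -/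
open Matrix Finset MeasureTheory ProbabilityTheory

/-- The (0-based) global index `(k−1)·Q + t` of sample `t` of block `k`. -/
def blockIdx (nT Q : ℕ) (k : Fin nT) (t : Fin Q) : Fin (nT * Q) := finProdFinEquiv (k, t)

/-- The block containing global index `i`. -/
def blockOf (nT Q : ℕ) (i : Fin (nT * Q)) : Fin nT := (finProdFinEquiv.symm i).1

/-- `h(a) = (1+a)·log(1+a) − a`. -/
noncomputable def hfun (a : ℝ) : ℝ := (1 + a) * Real.log (1 + a) - a

/-- `f_bt(μ, ϱ, r) = 2s·exp(−(ϱ/μ²)·h(μ·r/ϱ))`. -/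
noncomputable def fbt (s : ℕ) (μ ϱ r : ℝ) : ℝ :=
  2 * s * Real.exp (-(ϱ / μ ^ 2) * hfun (μ * r / ϱ))

/-!
Up to scaling, `Us† G Us` is `∑ₖ (Q / aₖ) Bₖ` minus `∑ᵢ ξᵢ B_{k(i)}`, where `Bₖ ≥ 0` is the Gram
matrix of the rows in block `k`, `aₖ ≤ Q η_U` is its trace, and `ξᵢ = (1 - Eᵢ / μ_E) / a_{k(i)}` are
independent and centred. As `∑ₖ Bₖ = 1`, the first sum is at least `1 / η_U`, so the theorem is a
one-sided Bennett bound for the random matrix `∑ᵢ ξᵢ B_{k(i)}`.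

The bound comes from the trace exponential `tr exp`. For `0 ≤ B ≤ m` the derivative
`g(t) = tr (B exp (X + t B))` of `tr exp (X + t B)` satisfies `g' ≤ m g`, because the trapezoid rule
overestimates the integral of a convex function. Hence
`tr exp (X + t B) ≤ tr exp X + tr (B exp X) (exp (m t) - 1) / m`, while Klein's inequality gives
`tr exp X + c tr (B exp X) ≤ tr exp (X + c B)`. For `t = ξ` centred, bounded above and independent
of `X`, averaging therefore replaces `ξ` by a constant of the size of its variance. Doing this for
one `ξᵢ` at a time bounds `𝔼 tr exp` by the trace exponential of a deterministic matrix.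
-/

section Scalar

open Filter Topology

lemma two_mul_exp_sub_one_le {z : ℝ} (hz : 0 ≤ z) :
    2 * (Real.exp z - 1) ≤ z * (1 + Real.exp z) := by
  let φ : ℝ → ℝ := fun z => z * (1 + Real.exp z) - 2 * (Real.exp z - 1)
  have hφ : ∀ u, HasDerivAt φ (1 + u * Real.exp u - Real.exp u) u := fun u => by
    have h := Real.hasDerivAt_exp u
    refine (((hasDerivAt_id u).mul (h.const_add 1)).sub
      ((h.sub_const 1).const_mul 2)).congr_deriv ?_
    simp only [id_eq]
    ring
  have hmono : MonotoneOn φ (Set.Ici 0) := by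
    refine monotoneOn_of_deriv_nonneg (convex_Ici 0) (by fun_prop) (by fun_prop) fun u _ => ?_
    have hexp : (1 - u) * Real.exp u ≤ 1 := by
      calc (1 - u) * Real.exp u ≤ Real.exp (-u) * Real.exp u := by
            gcongr
            exact Real.one_sub_le_exp_neg u
        _ = 1 := by rw [← Real.exp_add, neg_add_cancel, Real.exp_zero]
    rw [(hφ u).deriv]
    linarith
  have := hmono Set.self_mem_Ici hz hz
  simp only [φ, zero_mul, Real.exp_zero, sub_self, mul_zero] at this
  linarith

/- The trapezoid rule overestimates the integral of the convex function `exp`. -/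
lemma two_mul_sub_mul_exp_sub_exp_le (x y : ℝ) :
    2 * ((y - x) * (Real.exp y - Real.exp x)) ≤ (y - x) ^ 2 * (Real.exp x + Real.exp y) := by
  wlog hxy : x ≤ y generalizing x y
  · linarith [this y x (le_of_not_ge hxy)]
  have hexp : Real.exp y = Real.exp x * Real.exp (y - x) := by
    rw [← Real.exp_add, add_sub_cancel]
  have := mul_le_mul_of_nonneg_left (two_mul_exp_sub_one_le (sub_nonneg.2 hxy))
    (mul_nonneg (sub_nonneg.2 hxy) (Real.exp_pos x).le)
  rw [hexp]
  linarith

lemma exp_mul_sub_le_exp_sub_exp (x y : ℝ) :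
    Real.exp x * (y - x) ≤ Real.exp y - Real.exp x := by
  have hexp : Real.exp y = Real.exp x * Real.exp (y - x) := by
    rw [← Real.exp_add, add_sub_cancel]
  have := mul_le_mul_of_nonneg_left (Real.add_one_le_exp (y - x)) (Real.exp_pos x).le
  linarith

lemma exp_le_quadratic_of_nonpos {y : ℝ} (hy : y ≤ 0) : Real.exp y ≤ 1 + y + y ^ 2 / 2 := by
  have hneg : 1 - y + y ^ 2 / 2 ≤ Real.exp (-y) := by
    simpa [sub_eq_add_neg] using Real.quadratic_le_exp_of_nonneg (neg_nonneg.2 hy)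
  have hinv : Real.exp y * Real.exp (-y) = 1 := by
    rw [← Real.exp_add, add_neg_cancel, Real.exp_zero]
  nlinarith [Real.exp_pos y, sq_nonneg (y ^ 2), sq_nonneg (y + 1)]

lemma hasSum_exp_sub_sub_one (x : ℝ) :
    HasSum (fun k : ℕ => x ^ (k + 2) / ((k + 2).factorial : ℝ)) (Real.exp x - x - 1) := by
  have := (hasSum_nat_add_iff' 2).2 (NormedSpace.expSeries_div_hasSum_exp (𝔸 := ℝ) x)
  have hhead : ∑ i ∈ range 2, x ^ i / (i.factorial : ℝ) = x + 1 := by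
    simp [sum_range_succ, add_comm]
  rwa [← Real.exp_eq_exp_ℝ, hhead, ← sub_sub] at this

/- Equivalently, `(eʸ - y - 1) / y²` is increasing in `y`. -/
lemma exp_le_one_add_add_sq_mul {y K : ℝ} (hK : 0 < K) (hy : y ≤ K) :
    Real.exp y ≤ 1 + y + y ^ 2 * ((Real.exp K - K - 1) / K ^ 2) := by
  rcases le_total y 0 with hy0 | hy0
  · have hhalf : 1 / 2 ≤ (Real.exp K - K - 1) / K ^ 2 := by
      rw [le_div_iff₀ (by positivity)]
      linarith [Real.quadratic_le_exp_of_nonneg hK.le]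
    nlinarith [exp_le_quadratic_of_nonpos hy0, sq_nonneg y]
  · have hterm (k : ℕ) : y ^ (k + 2) / ((k + 2).factorial : ℝ) ≤
        y ^ 2 / K ^ 2 * (K ^ (k + 2) / ((k + 2).factorial : ℝ)) := by
      calc y ^ (k + 2) / ((k + 2).factorial : ℝ)
          = y ^ 2 * y ^ k / ((k + 2).factorial : ℝ) := by ring
        _ ≤ y ^ 2 * K ^ k / ((k + 2).factorial : ℝ) := by gcongr
        _ = y ^ 2 / K ^ 2 * (K ^ (k + 2) / ((k + 2).factorial : ℝ)) := by
            field_simp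
            ring
    have := hasSum_le hterm (hasSum_exp_sub_sub_one y)
      ((hasSum_exp_sub_sub_one K).mul_left (y ^ 2 / K ^ 2))
    rw [← mul_div_assoc, mul_div_right_comm]
    linarith

lemma hasDerivAt_of_continuousAt_subgradient {f g : ℝ → ℝ} {a : ℝ}
    (hfg : ∀ x y, (y - x) * g x ≤ f y - f x) (hg : ContinuousAt g a) : HasDerivAt f (g a) a := by
  have hbound (b : ℝ) : ‖f b - f a - (b - a) • g a‖ ≤ ‖(g b - g a) * (b - a)‖ := by
    have hlower := hfg a b
    have hupper := hfg b a
    rw [smul_eq_mul, Real.norm_of_nonneg (by linarith)]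
    exact le_trans (by linarith) (le_abs_self _)
  have hsmall : (fun b => g b - g a) =o[𝓝 a] fun _ => (1 : ℝ) :=
    (Asymptotics.isLittleO_one_iff ℝ).2 (tendsto_sub_nhds_zero_iff.2 hg)
  rw [hasDerivAt_iff_isLittleO]
  refine (Asymptotics.isBigO_of_le _ hbound).trans_isLittleO ?_
  simpa using hsmall.mul_isBigO (Asymptotics.isBigO_refl (fun b => b - a) (𝓝 a))

lemma le_mul_exp_of_trapezoid {g : ℝ → ℝ} {K : ℝ} (hg : Continuous g)
    (htrap : ∀ a b, 2 * ((b - a) * (g b - g a)) ≤ (b - a) ^ 2 * (K * (g a + g b)))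
    {a b : ℝ} (hab : a ≤ b) : g b ≤ g a * Real.exp (K * (b - a)) := by
  have hslope (x c : ℝ) (hc : K * g x < c) :
      ∃ᶠ z in 𝓝[>] x, (z - x)⁻¹ * (g z - g x) < c := by
    have hlim : Tendsto (fun z => K * (g x + g z) / 2) (𝓝[>] x) (𝓝 (K * g x)) := by
      have : Tendsto (fun z => K * (g x + g z) / 2) (𝓝 x) (𝓝 (K * (g x + g x) / 2)) :=
        Continuous.tendsto (by fun_prop) x
      rw [show K * (g x + g x) / 2 = K * g x by ring] at this
      exact this.mono_left nhdsWithin_le_nhds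
    refine Eventually.frequently ?_
    filter_upwards [hlim.eventually_lt_const hc, self_mem_nhdsWithin] with z hz hxz
    have hpos : 0 < z - x := sub_pos.2 hxz
    refine lt_of_le_of_lt ?_ hz
    rw [inv_mul_le_iff₀ hpos]
    refine le_of_mul_le_mul_left ?_ hpos
    linarith [htrap x z]
  have := le_gronwallBound_of_liminf_deriv_right_le (f' := fun x => K * g x) (ε := 0)
    hg.continuousOn (fun x _ => hslope x) le_rfl (fun x _ => (add_zero (K * g x)).ge)
    b (Set.right_mem_Icc.2 hab)
  rwa [gronwallBound_ε0] at this

lemma le_add_mul_of_subgradient_of_trapezoid {f g : ℝ → ℝ} {K : ℝ} (hK : 0 < K)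
    (hg : Continuous g) (hfg : ∀ a b, (b - a) * g a ≤ f b - f a)
    (htrap : ∀ a b, 2 * ((b - a) * (g b - g a)) ≤ (b - a) ^ 2 * (K * (g a + g b))) (t : ℝ) :
    f t ≤ f 0 + g 0 * ((Real.exp (K * t) - 1) / K) := by
  let ψ : ℝ → ℝ := fun t => f t - g 0 * (Real.exp (K * t) / K)
  have hψ (a : ℝ) : HasDerivAt ψ (g a - g 0 * Real.exp (K * a)) a := by
    have hexp : HasDerivAt (fun t => Real.exp (K * t) / K) (Real.exp (K * a)) a := by
      refine (((hasDerivAt_id a).const_mul K).exp.div_const K).congr_deriv ?_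
      simp [hK.ne']
    exact (hasDerivAt_of_continuousAt_subgradient hfg hg.continuousAt).sub (hexp.const_mul _)
  have hdiff : Differentiable ℝ ψ := fun a => (hψ a).differentiableAt
  suffices ψ t ≤ ψ 0 by
    simp only [ψ, mul_zero, Real.exp_zero] at this
    rw [sub_div, mul_sub]
    linarith
  rcases le_total 0 t with ht | ht
  · refine antitoneOn_of_deriv_nonpos (convex_Ici 0) hdiff.continuous.continuousOn
      hdiff.differentiableOn (fun x hx => ?_) Set.self_mem_Ici ht ht
    rw [interior_Ici] at hx
    have := le_mul_exp_of_trapezoid hg htrap (le_of_lt hx)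
    rw [sub_zero] at this
    rw [(hψ x).deriv]
    linarith
  · refine monotoneOn_of_deriv_nonneg (convex_Iic 0) hdiff.continuous.continuousOn
      hdiff.differentiableOn (fun x hx => ?_) ht Set.self_mem_Iic ht
    rw [interior_Iic] at hx
    have := mul_le_mul_of_nonneg_right (le_mul_exp_of_trapezoid hg htrap (le_of_lt hx))
      (Real.exp_pos (K * x)).le
    rw [mul_assoc, ← Real.exp_add, ← mul_add, sub_add_cancel, mul_zero, Real.exp_zero,
      mul_one] at this
    rw [(hψ x).deriv]
    linarith

end Scalar

open scoped ComplexOrder MatrixOrder Matrix.Norms.L2Operator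

section Trace

variable {n : Type*} [Fintype n] [DecidableEq n] {X Y : Matrix n n ℂ}

/-- The squared moduli `|⟨uᵢ, vⱼ⟩|²` of the inner products between the eigenvectors `uᵢ` of `X` and
`vⱼ` of `Y`. Traces of products of a function of `X` and a function of `Y` are sums against these
weights. -/
noncomputable def eigenOverlap (hX : X.IsHermitian) (hY : Y.IsHermitian) (i j : n) : ℝ :=
  ‖((hX.eigenvectorUnitary : Matrix n n ℂ)ᴴ * (hY.eigenvectorUnitary : Matrix n n ℂ)) i j‖ ^ 2

lemma eigenOverlap_nonneg (hX : X.IsHermitian) (hY : Y.IsHermitian) (i j : n) :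
    0 ≤ eigenOverlap hX hY i j :=
  sq_nonneg _

lemma eigenOverlap_comm (hX : X.IsHermitian) (hY : Y.IsHermitian) (i j : n) :
    eigenOverlap hX hY i j = eigenOverlap hY hX j i := by
  rw [eigenOverlap, eigenOverlap, ← norm_star, ← conjTranspose_apply, conjTranspose_mul,
    conjTranspose_conjTranspose]

lemma re_trace_diagonal_mul_mul_diagonal_mul (W : Matrix n n ℂ) (a b : n → ℝ) :
    (diagonal (fun i => (a i : ℂ)) * W * diagonal (fun j => (b j : ℂ)) * Wᴴ).trace.re =
      ∑ i, ∑ j, ‖W i j‖ ^ 2 * (a i * b j) := by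
  simp only [trace, diag_apply, Matrix.mul_apply (N := Wᴴ), mul_diagonal, diagonal_mul,
    conjTranspose_apply, Complex.re_sum]
  refine sum_congr rfl fun i _ => sum_congr rfl fun j _ => ?_
  have : (a i : ℂ) * W i j * b j * star (W i j) = ((‖W i j‖ ^ 2 * (a i * b j) : ℝ) : ℂ) := by
    rw [mul_right_comm, mul_assoc (a i : ℂ), Complex.star_def, Complex.mul_conj']
    push_cast
    ring
  rw [this, Complex.ofReal_re]

lemma cfc_eq_eigenvectorUnitary_mul_diagonal_mul (hX : X.IsHermitian) (f : ℝ → ℝ) :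
    cfc f X = (hX.eigenvectorUnitary : Matrix n n ℂ) *
      diagonal (fun i => (f (hX.eigenvalues i) : ℂ)) * (hX.eigenvectorUnitary : Matrix n n ℂ)ᴴ := by
  rw [hX.cfc_eq, IsHermitian.cfc, Unitary.conjStarAlgAut_apply]
  rfl

lemma re_trace_cfc_mul_cfc (hX : X.IsHermitian) (hY : Y.IsHermitian) (f h : ℝ → ℝ) :
    (cfc f X * cfc h Y).trace.re =
      ∑ i, ∑ j, eigenOverlap hX hY i j * (f (hX.eigenvalues i) * h (hY.eigenvalues j)) := by
  simp only [eigenOverlap]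
  rw [← re_trace_diagonal_mul_mul_diagonal_mul, conjTranspose_mul, conjTranspose_conjTranspose,
    cfc_eq_eigenvectorUnitary_mul_diagonal_mul hX, cfc_eq_eigenvectorUnitary_mul_diagonal_mul hY]
  simp only [Matrix.mul_assoc]
  rw [trace_mul_comm]
  simp only [Matrix.mul_assoc]

lemma cfc_mul_cfc (f h : ℝ → ℝ) : cfc f X * cfc h X = cfc (fun x => f x * h x) X :=
  (cfc_mul f h X (finite_real_spectrum.continuousOn f) (finite_real_spectrum.continuousOn h)).symm

lemma re_trace_cfc_eq_sum_left (hX : X.IsHermitian) (hY : Y.IsHermitian) (f : ℝ → ℝ) :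
    (cfc f X).trace.re = ∑ i, ∑ j, eigenOverlap hX hY i j * f (hX.eigenvalues i) := by
  simpa [cfc_const_one ℝ Y hY.isSelfAdjoint] using re_trace_cfc_mul_cfc hX hY f fun _ => 1

lemma re_trace_cfc_eq_sum_right (hX : X.IsHermitian) (hY : Y.IsHermitian) (f : ℝ → ℝ) :
    (cfc f Y).trace.re = ∑ i, ∑ j, eigenOverlap hX hY i j * f (hY.eigenvalues j) := by
  simpa [cfc_const_one ℝ X hX.isSelfAdjoint] using re_trace_cfc_mul_cfc hX hY (fun _ => 1) f

lemma re_trace_sub_mul_cfc_left (hX : X.IsHermitian) (hY : Y.IsHermitian) (f : ℝ → ℝ) :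
    ((Y - X) * cfc f X).trace.re = ∑ i, ∑ j, eigenOverlap hX hY i j *
      ((hY.eigenvalues j - hX.eigenvalues i) * f (hX.eigenvalues i)) := by
  have hYX : (Y * cfc f X).trace = (cfc f X * cfc (id : ℝ → ℝ) Y).trace := by
    rw [cfc_id ℝ Y hY.isSelfAdjoint, trace_mul_comm]
  have hXX : X * cfc f X = cfc (fun x : ℝ => id x * f x) X := by
    rw [← cfc_mul_cfc, cfc_id ℝ X hX.isSelfAdjoint]
  rw [sub_mul, trace_sub, Complex.sub_re, hYX, hXX, re_trace_cfc_mul_cfc hX hY,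
    re_trace_cfc_eq_sum_left hX hY]
  simp only [← sum_sub_distrib, id_eq]
  exact sum_congr rfl fun i _ => sum_congr rfl fun j _ => by ring

lemma re_trace_sub_mul_cfc_right (hX : X.IsHermitian) (hY : Y.IsHermitian) (f : ℝ → ℝ) :
    ((Y - X) * cfc f Y).trace.re = ∑ i, ∑ j, eigenOverlap hX hY i j *
      ((hY.eigenvalues j - hX.eigenvalues i) * f (hY.eigenvalues j)) := by
  rw [← neg_sub X Y, neg_mul, trace_neg, Complex.neg_re, re_trace_sub_mul_cfc_left hY hX, sum_comm]
  simp only [← sum_neg_distrib, eigenOverlap_comm hY hX]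
  exact sum_congr rfl fun i _ => sum_congr rfl fun j _ => by ring

lemma re_trace_sub_mul_sub_mul_cfc_left (hX : X.IsHermitian) (hY : Y.IsHermitian) (f : ℝ → ℝ) :
    ((Y - X) * (Y - X) * cfc f X).trace.re = ∑ i, ∑ j, eigenOverlap hX hY i j *
      ((hY.eigenvalues j - hX.eigenvalues i) ^ 2 * f (hX.eigenvalues i)) := by
  have hYY : (Y * Y * cfc f X).trace = (cfc f X * cfc (fun y : ℝ => id y * id y) Y).trace := by
    rw [← cfc_mul_cfc, cfc_id ℝ Y hY.isSelfAdjoint, trace_mul_comm]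
  have hXX : (X * (X * cfc f X)).trace = (cfc (fun x => id x * (id x * f x)) X).trace := by
    rw [← cfc_mul_cfc, ← cfc_mul_cfc, cfc_id ℝ X hX.isSelfAdjoint]
  have hYX : (Y * (X * cfc f X)).trace =
      (cfc (fun x => id x * f x) X * cfc (id : ℝ → ℝ) Y).trace := by
    rw [← cfc_mul_cfc, cfc_id ℝ X hX.isSelfAdjoint, cfc_id ℝ Y hY.isSelfAdjoint, trace_mul_comm]
  have hXY : (X * (Y * cfc f X)).trace =
      (cfc (fun x => f x * id x) X * cfc (id : ℝ → ℝ) Y).trace := by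
    rw [← cfc_mul_cfc, cfc_id ℝ X hX.isSelfAdjoint, cfc_id ℝ Y hY.isSelfAdjoint,
      ← Matrix.mul_assoc, trace_mul_comm, Matrix.mul_assoc]
  have hexpand : (Y - X) * (Y - X) * cfc f X =
      Y * Y * cfc f X - Y * (X * cfc f X) - X * (Y * cfc f X) + X * (X * cfc f X) := by
    noncomm_ring
  simp only [hexpand, trace_add, trace_sub, Complex.add_re, Complex.sub_re, hYY, hYX, hXY, hXX,
    re_trace_cfc_mul_cfc hX hY, re_trace_cfc_eq_sum_left hX hY]
  simp only [← sum_sub_distrib, ← sum_add_distrib, id_eq]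
  exact sum_congr rfl fun i _ => sum_congr rfl fun j _ => by ring

lemma re_trace_sub_mul_sub_mul_cfc_right (hX : X.IsHermitian) (hY : Y.IsHermitian) (f : ℝ → ℝ) :
    ((Y - X) * (Y - X) * cfc f Y).trace.re = ∑ i, ∑ j, eigenOverlap hX hY i j *
      ((hY.eigenvalues j - hX.eigenvalues i) ^ 2 * f (hY.eigenvalues j)) := by
  rw [← neg_sub X Y, neg_mul_neg, re_trace_sub_mul_sub_mul_cfc_left hY hX, sum_comm]
  simp only [eigenOverlap_comm hY hX]
  exact sum_congr rfl fun i _ => sum_congr rfl fun j _ => by ring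

/- Klein's inequality, which holds termwise in the expansion over the eigenvector overlaps. -/
lemma re_trace_sub_mul_cfc_le_of_subgradient {f f' : ℝ → ℝ}
    (hf : ∀ x y, (y - x) * f' x ≤ f y - f x) (hX : X.IsHermitian) (hY : Y.IsHermitian) :
    ((Y - X) * cfc f' X).trace.re ≤ (cfc f Y).trace.re - (cfc f X).trace.re := by
  rw [re_trace_sub_mul_cfc_left hX hY, re_trace_cfc_eq_sum_right hX hY,
    re_trace_cfc_eq_sum_left hX hY]
  simp only [← sum_sub_distrib, ← mul_sub]
  gcongr
  · exact eigenOverlap_nonneg hX hY _ _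
  · exact hf _ _

lemma re_trace_trapezoid_cfc {f : ℝ → ℝ}
    (hf : ∀ x y, 2 * ((y - x) * (f y - f x)) ≤ (y - x) ^ 2 * (f x + f y))
    (hX : X.IsHermitian) (hY : Y.IsHermitian) :
    2 * (((Y - X) * cfc f Y).trace.re - ((Y - X) * cfc f X).trace.re) ≤
      ((Y - X) * (Y - X) * cfc f X).trace.re + ((Y - X) * (Y - X) * cfc f Y).trace.re := by
  rw [re_trace_sub_mul_cfc_left hX hY, re_trace_sub_mul_cfc_right hX hY,
    re_trace_sub_mul_sub_mul_cfc_left hX hY, re_trace_sub_mul_sub_mul_cfc_right hX hY]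
  simp only [← sum_sub_distrib, ← sum_add_distrib, mul_sum]
  refine sum_le_sum fun i _ => sum_le_sum fun j _ => ?_
  have := mul_le_mul_of_nonneg_left (hf (hX.eigenvalues i) (hY.eigenvalues j))
    (eigenOverlap_nonneg hX hY i j)
  linarith

end Trace

section Loewner

variable {n : Type*} [Fintype n]

lemma re_dotProduct_mulVec_mono {X Y : Matrix n n ℂ} (hXY : X ≤ Y) (v : n → ℂ) :
    (star v ⬝ᵥ X *ᵥ v).re ≤ (star v ⬝ᵥ Y *ᵥ v).re := by
  have := (Complex.le_def.1 ((Matrix.le_iff.1 hXY).dotProduct_mulVec_nonneg v)).1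
  rwa [sub_mulVec, dotProduct_sub, Complex.sub_re, Complex.zero_re, sub_nonneg] at this

variable [DecidableEq n] {A : Matrix n n ℂ}

lemma mul_self_le_smul {m : ℝ} (hA : 0 ≤ A) (hAm : A ≤ m • 1) : A * A ≤ m • A := by
  have hcomm : Commute A (m • 1 - A) := by simp [Commute, SemiconjBy, mul_sub, sub_mul]
  have := hcomm.mul_nonneg hA (sub_nonneg.2 hAm)
  simpa [mul_sub] using this

lemma le_re_trace_smul_one (hA : 0 ≤ A) : A ≤ A.trace.re • 1 := by
  have hpsd := hA.posSemidef
  rw [← Algebra.algebraMap_eq_smul_one]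
  refine le_algebraMap_of_spectrum_le (fun x hx => ?_) hpsd.isHermitian.isSelfAdjoint
  obtain ⟨i, rfl⟩ : x ∈ Set.range hpsd.isHermitian.eigenvalues := by
    rwa [← hpsd.isHermitian.spectrum_real_eq_range_eigenvalues]
  rw [hpsd.isHermitian.trace_eq_sum_eigenvalues, ← RCLike.ofReal_sum]
  exact single_le_sum (fun j _ => hpsd.eigenvalues_nonneg j) (mem_univ i)

lemma one_add_le_exp (hA : A.IsHermitian) : 1 + A ≤ NormedSpace.exp A := by
  have hlin : cfc (fun x : ℝ => 1 + x) A = 1 + A := by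
    rw [cfc_const_add 1 (fun x => x) A, cfc_id' ℝ A, map_one]
  rw [← CFC.real_exp_eq_normedSpace_exp hA.isSelfAdjoint, ← hlin]
  exact cfc_mono fun x _ => by linarith [Real.add_one_le_exp x]

lemma exists_unit_re_dotProduct_eq_iInf_eigenvalues {n : Type*} [Fintype n] [DecidableEq n]
    [Nonempty n] {A : Matrix n n ℂ} (hA : A.IsHermitian) :
    ∃ v : n → ℂ, star v ⬝ᵥ v = 1 ∧ (star v ⬝ᵥ A *ᵥ v).re = ⨅ i, hA.eigenvalues i := by
  obtain ⟨i, hi⟩ := exists_eq_ciInf_of_finite (f := hA.eigenvalues)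
  refine ⟨hA.eigenvectorBasis i, ?_, ?_⟩
  · rw [dotProduct_comm, ← EuclideanSpace.inner_eq_star_dotProduct,
      inner_self_eq_norm_sq_to_K, hA.eigenvectorBasis.orthonormal.1 i]
    simp
  · rw [← hi, hA.eigenvalues_eq]
    rfl

end Loewner

section Gibbs

variable {n : Type*} [Fintype n] [DecidableEq n] {A X Y : Matrix n n ℂ} {m : ℝ}

/-- The unnormalised Gibbs functional `A ↦ Re tr (A eˣ)` of a Hermitian matrix `X`. Its value
`gibbs X 1` at the identity is the trace exponential `tr eˣ`. -/
noncomputable def gibbs (X : Matrix n n ℂ) : Matrix n n ℂ →ₗ[ℝ] ℝ :=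
  Complex.reLm ∘ₗ (traceLinearMap n ℂ ℂ).restrictScalars ℝ ∘ₗ
    LinearMap.mulRight ℝ (NormedSpace.exp X)

lemma gibbs_apply (X A : Matrix n n ℂ) : gibbs X A = (A * NormedSpace.exp X).trace.re := rfl

lemma gibbs_eq_re_trace_mul_cfc (hX : X.IsHermitian) (A : Matrix n n ℂ) :
    gibbs X A = (A * cfc Real.exp X).trace.re := by
  rw [gibbs_apply, CFC.real_exp_eq_normedSpace_exp hX.isSelfAdjoint]

lemma gibbs_one_eq_re_trace_cfc (hX : X.IsHermitian) :
    gibbs X 1 = (cfc Real.exp X).trace.re := by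
  rw [gibbs_eq_re_trace_mul_cfc hX, one_mul]

lemma continuous_gibbs (A : Matrix n n ℂ) : Continuous fun X => gibbs X A := by
  let _ := NormedAlgebra.restrictScalars ℚ ℂ (Matrix n n ℂ)
  exact Complex.continuous_re.comp
    (continuous_const.mul NormedSpace.exp_continuous).matrix_trace

lemma gibbs_nonneg (hX : X.IsHermitian) (hA : 0 ≤ A) : 0 ≤ gibbs X A := by
  obtain ⟨B, hB⟩ := CStarAlgebra.nonneg_iff_eq_star_mul_self.1 hX.isSelfAdjoint.exp_nonneg
  rw [gibbs_apply, hB, ← mul_assoc, trace_mul_comm, ← mul_assoc]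
  exact (Complex.le_def.1 (hA.posSemidef.mul_mul_conjTranspose_same B).trace_nonneg).1

lemma gibbs_mono (hX : X.IsHermitian) : Monotone (gibbs X) := fun A B hAB => by
  have := gibbs_nonneg hX (sub_nonneg.2 hAB)
  rwa [map_sub, sub_nonneg] at this

lemma gibbs_sub_le_gibbs_one_sub (hX : X.IsHermitian) (hY : Y.IsHermitian) :
    gibbs X (Y - X) ≤ gibbs Y 1 - gibbs X 1 := by
  rw [gibbs_eq_re_trace_mul_cfc hX, gibbs_one_eq_re_trace_cfc hX, gibbs_one_eq_re_trace_cfc hY]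
  refine re_trace_sub_mul_cfc_le_of_subgradient (fun x y => ?_) hX hY
  rw [mul_comm]
  exact exp_mul_sub_le_exp_sub_exp x y

lemma gibbs_trapezoid (hX : X.IsHermitian) (hY : Y.IsHermitian) :
    2 * (gibbs Y (Y - X) - gibbs X (Y - X)) ≤
      gibbs X ((Y - X) * (Y - X)) + gibbs Y ((Y - X) * (Y - X)) := by
  simp only [gibbs_eq_re_trace_mul_cfc hX, gibbs_eq_re_trace_mul_cfc hY]
  exact re_trace_trapezoid_cfc two_mul_sub_mul_exp_sub_exp_le hX hY

lemma gibbs_one_add_mul_le (hX : X.IsHermitian) (hA : A.IsHermitian) (c : ℝ) :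
    gibbs X 1 + c * gibbs X A ≤ gibbs (X + c • A) 1 := by
  have := gibbs_sub_le_gibbs_one_sub hX (hX.add (hA.smul (IsSelfAdjoint.all c)))
  rw [add_sub_cancel_left, map_smul, smul_eq_mul] at this
  linarith

lemma gibbs_one_le_gibbs_one (hX : X.IsHermitian) (hY : Y.IsHermitian) (hXY : X ≤ Y) :
    gibbs X 1 ≤ gibbs Y 1 := by
  linarith [gibbs_nonneg hX (sub_nonneg.2 hXY), gibbs_sub_le_gibbs_one_sub hX hY]

lemma gibbs_add_smul_trapezoid (hX : X.IsHermitian) (hA : 0 ≤ A) (hAm : A ≤ m • 1) (a b : ℝ) :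
    2 * ((b - a) * (gibbs (X + b • A) A - gibbs (X + a • A) A)) ≤
      (b - a) ^ 2 * (m * (gibbs (X + a • A) A + gibbs (X + b • A) A)) := by
  have hpath (t : ℝ) : (X + t • A).IsHermitian :=
    hX.add (hA.posSemidef.isHermitian.smul (IsSelfAdjoint.all t))
  have hsq (t : ℝ) : gibbs (X + t • A) (A * A) ≤ m * gibbs (X + t • A) A := by
    simpa using gibbs_mono (hpath t) (mul_self_le_smul hA hAm)
  have htrap := gibbs_trapezoid (hpath a) (hpath b)
  have hdiff : X + b • A - (X + a • A) = (b - a) • A := by module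
  rw [hdiff, smul_mul_smul_comm] at htrap
  simp only [map_smul, smul_eq_mul] at htrap
  nlinarith [mul_le_mul_of_nonneg_left (add_le_add (hsq a) (hsq b)) (sq_nonneg (b - a))]

/- The trapezoid bound says that `g t = gibbs (X + t • A) A`, the derivative of
`t ↦ gibbs (X + t • A) 1`, satisfies the differential inequality `g' ≤ m g`. This replaces the
Golden–Thompson and Lieb inequalities of the usual Laplace-transform argument. -/
lemma gibbs_add_smul_one_le (hX : X.IsHermitian) (hm : 0 < m) (hA : 0 ≤ A) (hAm : A ≤ m • 1)
    (t : ℝ) : gibbs (X + t • A) 1 ≤ gibbs X 1 + gibbs X A * ((Real.exp (m * t) - 1) / m) := by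
  have hAherm := hA.posSemidef.isHermitian
  have hsub (a b : ℝ) : (b - a) * gibbs (X + a • A) A ≤
      gibbs (X + b • A) 1 - gibbs (X + a • A) 1 := by
    have := gibbs_one_add_mul_le (hX.add (hAherm.smul (IsSelfAdjoint.all a))) hAherm (b - a)
    rw [add_assoc, ← add_smul, add_sub_cancel] at this
    linarith
  have hcont : Continuous fun t : ℝ => gibbs (X + t • A) A :=
    (continuous_gibbs A).comp (by fun_prop)
  simpa using le_add_mul_of_subgradient_of_trapezoid hm hcont hsub
    (gibbs_add_smul_trapezoid hX hA hAm) t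

lemma gibbs_smul_one_one (c : ℝ) :
    gibbs (c • (1 : Matrix n n ℂ)) 1 = Fintype.card n * Real.exp c := by
  rw [gibbs_one_eq_re_trace_cfc (isHermitian_one.smul (IsSelfAdjoint.all c)),
    ← Algebra.algebraMap_eq_smul_one, cfc_algebraMap, Algebra.algebraMap_eq_smul_one, trace_smul,
    trace_one, Complex.smul_re, Complex.natCast_re, smul_eq_mul, mul_comm]

lemma one_le_gibbs_one (hX : X.IsHermitian) {v : n → ℂ} (hv : star v ⬝ᵥ v = 1)
    (hXv : 0 ≤ (star v ⬝ᵥ X *ᵥ v).re) : 1 ≤ gibbs X 1 := by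
  have hle : 1 + X ≤ gibbs X 1 • (1 : Matrix n n ℂ) := by
    rw [gibbs_apply, one_mul]
    exact (one_add_le_exp hX).trans (le_re_trace_smul_one hX.isSelfAdjoint.exp_nonneg)
  have := re_dotProduct_mulVec_mono hle v
  simp only [add_mulVec, smul_mulVec, one_mulVec, dotProduct_add, dotProduct_smul, hv,
    Complex.add_re, Complex.smul_re, Complex.one_re, smul_eq_mul, mul_one] at this
  linarith

end Gibbs

section Probability

open scoped ENNReal

lemma isHermitian_add_sum_smul {n ι : Type*} {H : Matrix n n ℂ} {B : ι → Matrix n n ℂ}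
    (hH : H.IsHermitian) (hB : ∀ i, (B i).IsHermitian) (T : Finset ι) (x : ι → ℝ) :
    (H + ∑ i ∈ T, x i • B i).IsHermitian :=
  hH.add (isSelfAdjoint_sum T fun i _ => (hB i).smul (IsSelfAdjoint.all (x i)))

variable {Ω : Type*} [MeasurableSpace Ω] {P : Measure Ω}

lemma integrable_comp_of_memLp_top [IsFiniteMeasure P] {E : Type*} [NormedAddCommGroup E]
    [ProperSpace E] {f : Ω → E} (hf : MemLp f ∞ P) {F : E → ℝ} (hF : Continuous F) :
    Integrable (fun ω => F (f ω)) P := by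
  have hfin : eLpNormEssSup f P < ∞ := by simpa using hf.eLpNorm_lt_top
  obtain ⟨C, hC⟩ := (isCompact_closedBall (0 : E)
    (eLpNormEssSup f P).toReal).exists_bound_of_continuousOn hF.continuousOn
  refine .of_bound (hF.comp_aestronglyMeasurable hf.aestronglyMeasurable) C ?_
  filter_upwards [ae_le_eLpNormEssSup (f := f) (μ := P)] with ω hω
  refine hC _ (mem_closedBall_zero_iff.2 ?_)
  simpa using ENNReal.toReal_mono hfin.ne hω

lemma memLp_smul_const {E : Type*} [NormedAddCommGroup E] [NormedSpace ℝ E] {p : ℝ≥0∞}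
    {ξ : Ω → ℝ} (hξ : MemLp ξ p P) (v : E) : MemLp (fun ω => ξ ω • v) p P :=
  (ContinuousLinearMap.toSpanSingleton ℝ v).comp_memLp' hξ

lemma integral_exp_sub_one_le_variance_mul [IsProbabilityMeasure P] {ζ : Ω → ℝ} {K : ℝ}
    (hζ : MemLp ζ 2 P) (hmean : ∫ ω, ζ ω ∂P = 0) (hK : 0 < K) (hub : ∀ᵐ ω ∂P, ζ ω ≤ K) :
    ∫ ω, (Real.exp (ζ ω) - 1) ∂P ≤ Var[ζ; P] * ((Real.exp K - K - 1) / K ^ 2) := by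
  have hexp : Integrable (fun ω => Real.exp (ζ ω)) P := by
    refine .of_bound (Real.continuous_exp.comp_aestronglyMeasurable hζ.aestronglyMeasurable)
      (Real.exp K) ?_
    filter_upwards [hub] with ω hω
    rw [Real.norm_of_nonneg (Real.exp_pos _).le]
    exact Real.exp_le_exp.2 hω
  have hlin := hζ.integrable one_le_two
  have hsq := hζ.integrable_sq.mul_const ((Real.exp K - K - 1) / K ^ 2)
  calc ∫ ω, (Real.exp (ζ ω) - 1) ∂P
      ≤ ∫ ω, (ζ ω + ζ ω ^ 2 * ((Real.exp K - K - 1) / K ^ 2)) ∂P := by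
        refine integral_mono_ae (hexp.sub (integrable_const 1)) (hlin.add hsq) ?_
        filter_upwards [hub] with ω hω
        linarith [exp_le_one_add_add_sq_mul hK hω]
    _ = Var[ζ; P] * ((Real.exp K - K - 1) / K ^ 2) := by
        rw [integral_add hlin hsq, hmean, zero_add, integral_mul_const,
          variance_of_integral_eq_zero hζ.aemeasurable hmean]

variable {n ι : Type*} [Fintype n] [DecidableEq n] {B : ι → Matrix n n ℂ} {ξ : ι → Ω → ℝ} {m : ℝ}

lemma indepFun_gibbs_add_sum_smul (hξ : ∀ i, AEMeasurable (ξ i) P) (hindep : iIndepFun ξ P)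
    (H A : Matrix n n ℂ) (B : ι → Matrix n n ℂ) {T : Finset ι} {k : ι} (hk : k ∉ T) :
    IndepFun (fun ω => gibbs (H + ∑ i ∈ T, ξ i ω • B i) A) (ξ k) P := by
  have hleft : Measurable fun x : T → ℝ => gibbs (H + ∑ i : T, x i • B i) A :=
    ((continuous_gibbs A).comp (by fun_prop)).measurable
  have hright : Measurable fun x : ({k} : Finset ι) → ℝ => x ⟨k, mem_singleton_self k⟩ :=
    measurable_pi_apply _
  simp only [← sum_coe_sort T]
  exact (hindep.indepFun_finset₀ T {k} (disjoint_singleton_right.2 hk) hξ).comp hleft hright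

lemma memLp_add_sum_smul [IsFiniteMeasure P] (hξtop : ∀ i, MemLp (ξ i) ∞ P) (H : Matrix n n ℂ)
    (B : ι → Matrix n n ℂ) (T : Finset ι) : MemLp (fun ω => H + ∑ i ∈ T, ξ i ω • B i) ∞ P :=
  (memLp_const H).add (memLp_finsetSum T fun i _ => memLp_smul_const (hξtop i) (B i))

lemma measureReal_exists_re_dotProduct_nonneg_le [IsFiniteMeasure P] {W : Ω → Matrix n n ℂ}
    (hW : ∀ ω, (W ω).IsHermitian) (hWtop : MemLp W ∞ P) :
    P.real {ω | ∃ v : n → ℂ, star v ⬝ᵥ v = 1 ∧ 0 ≤ (star v ⬝ᵥ W ω *ᵥ v).re} ≤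
      ∫ ω, gibbs (W ω) 1 ∂P := by
  have hmarkov := mul_meas_ge_le_integral_of_nonneg
    (ae_of_all P fun ω => gibbs_nonneg (hW ω) zero_le_one)
    (integrable_comp_of_memLp_top hWtop (continuous_gibbs 1)) 1
  rw [one_mul] at hmarkov
  refine (measureReal_mono ?_).trans hmarkov
  rintro ω ⟨v, hv, hWv⟩
  exact one_le_gibbs_one (hW ω) hv hWv

lemma integral_gibbs_add_smul_le [IsFiniteMeasure P] {X : Ω → Matrix n n ℂ} {B : Matrix n n ℂ}
    {ξ : Ω → ℝ} {c : ℝ} (hX : ∀ ω, (X ω).IsHermitian) (hXtop : MemLp X ∞ P) (hξtop : MemLp ξ ∞ P)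
    (hindep : IndepFun (fun ω => gibbs (X ω) B) ξ P) (hm : 0 < m) (hB : 0 ≤ B) (hBm : B ≤ m • 1)
    (hc : ∫ ω, (Real.exp (m * ξ ω) - 1) / m ∂P ≤ c) :
    ∫ ω, gibbs (X ω + ξ ω • B) 1 ∂P ≤ ∫ ω, gibbs (X ω + c • B) 1 ∂P := by
  let q : Ω → ℝ := fun ω => (Real.exp (m * ξ ω) - 1) / m
  have hgB := integrable_comp_of_memLp_top hXtop (continuous_gibbs B)
  have hg1 := integrable_comp_of_memLp_top hXtop (continuous_gibbs (1 : Matrix n n ℂ))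
  have hq : Integrable q P :=
    integrable_comp_of_memLp_top (F := fun x => (Real.exp (m * x) - 1) / m) hξtop (by fun_prop)
  have hindep' : IndepFun (fun ω => gibbs (X ω) B) q P :=
    hindep.comp measurable_id (ψ := fun x => (Real.exp (m * x) - 1) / m) (by fun_prop)
  have hprod : Integrable (fun ω => gibbs (X ω) B * q ω) P := hindep'.integrable_mul hgB hq
  have hleft := integrable_comp_of_memLp_top (hXtop.add (memLp_smul_const hξtop B))
    (continuous_gibbs (1 : Matrix n n ℂ))
  have hright := integrable_comp_of_memLp_top (hXtop.add (memLp_const (c • B)))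
    (continuous_gibbs (1 : Matrix n n ℂ))
  calc ∫ ω, gibbs (X ω + ξ ω • B) 1 ∂P
      ≤ ∫ ω, (gibbs (X ω) 1 + gibbs (X ω) B * q ω) ∂P :=
        integral_mono hleft (hg1.add hprod) fun ω => gibbs_add_smul_one_le (hX ω) hm hB hBm _
    _ = ∫ ω, gibbs (X ω) 1 ∂P + (∫ ω, gibbs (X ω) B ∂P) * ∫ ω, q ω ∂P := by
        rw [integral_add hg1 hprod, hindep'.integral_fun_mul_eq_mul_integral
          hgB.aestronglyMeasurable hq.aestronglyMeasurable]
    _ ≤ ∫ ω, gibbs (X ω) 1 ∂P + (∫ ω, gibbs (X ω) B ∂P) * c := by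
        gcongr
        exact integral_nonneg fun ω => gibbs_nonneg (hX ω) hB
    _ = ∫ ω, (gibbs (X ω) 1 + c * gibbs (X ω) B) ∂P := by
        rw [integral_add hg1 (hgB.const_mul c), integral_const_mul, mul_comm c]
    _ ≤ ∫ ω, gibbs (X ω + c • B) 1 ∂P :=
        integral_mono (hg1.add (hgB.const_mul c)) hright fun ω =>
          gibbs_one_add_mul_le (hX ω) hB.posSemidef.isHermitian c

variable [IsProbabilityMeasure P]

lemma integral_gibbs_add_sum_smul_le {c : ι → ℝ} (hξtop : ∀ i, MemLp (ξ i) ∞ P)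
    (hindep : iIndepFun ξ P) (hm : 0 < m) (hB : ∀ i, 0 ≤ B i) (hBm : ∀ i, B i ≤ m • 1)
    (hc : ∀ i, ∫ ω, (Real.exp (m * ξ i ω) - 1) / m ∂P ≤ c i)
    {H : Matrix n n ℂ} (hH : H.IsHermitian) (T : Finset ι) :
    ∫ ω, gibbs (H + ∑ i ∈ T, ξ i ω • B i) 1 ∂P ≤ gibbs (H + ∑ i ∈ T, c i • B i) 1 := by
  classical
  have hBherm (i : ι) : (B i).IsHermitian := (hB i).posSemidef.isHermitian
  induction T using Finset.induction_on generalizing H with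
  | empty => simp
  | insert k T hk ih =>
    simp only [sum_insert hk]
    calc ∫ ω, gibbs (H + (ξ k ω • B k + ∑ i ∈ T, ξ i ω • B i)) 1 ∂P
        = ∫ ω, gibbs (H + ∑ i ∈ T, ξ i ω • B i + ξ k ω • B k) 1 ∂P := by
          simp only [add_right_comm, add_assoc]
      _ ≤ ∫ ω, gibbs (H + ∑ i ∈ T, ξ i ω • B i + c k • B k) 1 ∂P :=
          integral_gibbs_add_smul_le
            (fun ω => isHermitian_add_sum_smul hH hBherm T fun i => ξ i ω)
            (memLp_add_sum_smul hξtop H B T) (hξtop k)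
            (indepFun_gibbs_add_sum_smul (fun i => (hξtop i).aemeasurable) hindep H (B k) B hk)
            hm (hB k) (hBm k) (hc k)
      _ = ∫ ω, gibbs (H + c k • B k + ∑ i ∈ T, ξ i ω • B i) 1 ∂P := by
          simp only [add_right_comm]
      _ ≤ gibbs (H + c k • B k + ∑ i ∈ T, c i • B i) 1 :=
          ih (hH.add ((hBherm k).smul (IsSelfAdjoint.all (c k))))
      _ = gibbs (H + (c k • B k + ∑ i ∈ T, c i • B i)) 1 := by rw [add_assoc]

lemma integral_exp_mul_sub_one_div_le {ζ : Ω → ℝ} {θ μ : ℝ} (hζ : MemLp ζ 2 P)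
    (hmean : ∫ ω, ζ ω ∂P = 0) (hm : 0 < m) (hθ : 0 < θ) (hμ : 0 < μ)
    (hub : ∀ᵐ ω ∂P, m * ζ ω ≤ μ) :
    ∫ ω, (Real.exp (m * (θ * ζ ω)) - 1) / m ∂P ≤
      (Real.exp (θ * μ) - θ * μ - 1) / μ ^ 2 * (m * Var[ζ; P]) := by
  have hmul (ω : Ω) : m * (θ * ζ ω) = θ * m * ζ ω := by ring
  have hub' : ∀ᵐ ω ∂P, θ * m * ζ ω ≤ θ * μ := by
    filter_upwards [hub] with ω hω
    rw [mul_assoc]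
    gcongr
  have := integral_exp_sub_one_le_variance_mul (hζ.const_mul (θ * m))
    (by rw [integral_const_mul, hmean, mul_zero]) (mul_pos hθ hμ) hub'
  rw [variance_const_mul] at this
  simp only [hmul]
  rw [integral_div, div_le_iff₀ hm]
  refine this.trans_eq ?_
  field_simp

lemma ofReal_one_sub_le_measure {S T : Set Ω} {x : ℝ} (hST : Sᶜ ⊆ T) (hT : P.real T ≤ x) :
    ENNReal.ofReal (1 - x) ≤ P S := by
  rw [ENNReal.ofReal_sub _ (measureReal_nonneg.trans hT), ENNReal.ofReal_one, tsub_le_iff_right]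
  calc (1 : ℝ≥0∞) = P (S ∪ Sᶜ) := by rw [Set.union_compl_self, measure_univ]
    _ ≤ P S + P T := (measure_union_le S Sᶜ).trans (by gcongr)
    _ ≤ P S + ENNReal.ofReal x := by
        gcongr
        exact (ENNReal.le_ofReal_iff_toReal_le (measure_ne_top P T)
          (measureReal_nonneg.trans hT)).2 hT

variable [Fintype ι] {μ ϱ r : ℝ}

lemma matrix_bennett_laplace (hξtop : ∀ i, MemLp (ξ i) ∞ P) (hindep : iIndepFun ξ P)
    (hmean : ∀ i, ∫ ω, ξ i ω ∂P = 0) (hm : 0 < m) (hB : ∀ i, 0 ≤ B i) (hBm : ∀ i, B i ≤ m • 1)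
    (hμ : 0 < μ) (hub : ∀ i, ∀ᵐ ω ∂P, m * ξ i ω ≤ μ)
    (hvar : ∑ i, (m * Var[ξ i; P]) • B i ≤ ϱ • 1) {θ : ℝ} (hθ : 0 < θ) :
    P.real {ω | ∃ v : n → ℂ, star v ⬝ᵥ v = 1 ∧ r ≤ (star v ⬝ᵥ (∑ i, ξ i ω • B i) *ᵥ v).re} ≤
      Fintype.card n *
        Real.exp ((Real.exp (θ * μ) - θ * μ - 1) / μ ^ 2 * ϱ - θ * r) := by
  set κ := (Real.exp (θ * μ) - θ * μ - 1) / μ ^ 2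
  have hκ : 0 ≤ κ := div_nonneg (by linarith [Real.add_one_le_exp (θ * μ)]) (sq_nonneg μ)
  let H : Matrix n n ℂ := (-(θ * r)) • 1
  have hH : H.IsHermitian := isHermitian_one.smul (IsSelfAdjoint.all _)
  have hBherm (i : ι) : (B i).IsHermitian := (hB i).posSemidef.isHermitian
  have hθξ (i : ι) : MemLp (fun ω => θ * ξ i ω) ∞ P := (hξtop i).const_mul θ
  calc P.real _
      ≤ P.real {ω | ∃ v : n → ℂ, star v ⬝ᵥ v = 1 ∧
          0 ≤ (star v ⬝ᵥ (H + ∑ i, (θ * ξ i ω) • B i) *ᵥ v).re} := by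
        refine measureReal_mono fun ω ⟨v, hv, hrv⟩ => ⟨v, hv, ?_⟩
        simp only [H, mul_smul, ← smul_sum, add_mulVec, smul_mulVec, one_mulVec, dotProduct_add,
          dotProduct_smul, hv, Complex.add_re, Complex.smul_re, Complex.one_re, smul_eq_mul]
        nlinarith
    _ ≤ ∫ ω, gibbs (H + ∑ i, (θ * ξ i ω) • B i) 1 ∂P :=
        measureReal_exists_re_dotProduct_nonneg_le
          (fun ω => isHermitian_add_sum_smul hH hBherm univ _) (memLp_add_sum_smul hθξ H B univ)
    _ ≤ gibbs (H + ∑ i, (κ * (m * Var[ξ i; P])) • B i) 1 :=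
        integral_gibbs_add_sum_smul_le hθξ
          (hindep.comp (fun _ x => θ * x) fun _ => measurable_const_mul θ) hm hB hBm
          (fun i => integral_exp_mul_sub_one_div_le ((hξtop i).mono_exponent le_top) (hmean i) hm hθ
            hμ (hub i)) hH univ
    _ ≤ gibbs ((κ * ϱ - θ * r) • 1) 1 := by
        refine gibbs_one_le_gibbs_one (isHermitian_add_sum_smul hH hBherm univ _)
          (isHermitian_one.smul (IsSelfAdjoint.all _)) ?_
        simp only [H, mul_smul κ, ← smul_sum]
        rw [sub_eq_neg_add, add_smul, mul_smul κ]
        gcongr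
    _ = Fintype.card n * Real.exp (κ * ϱ - θ * r) := gibbs_smul_one_one _

/- The Laplace parameter `θ = log (1 + μ r / ϱ) / μ` minimises the exponent
`(exp (θ μ) - θ μ - 1) / μ² * ϱ - θ r`. -/
theorem matrix_bennett (hξtop : ∀ i, MemLp (ξ i) ∞ P) (hindep : iIndepFun ξ P)
    (hmean : ∀ i, ∫ ω, ξ i ω ∂P = 0) (hm : 0 < m) (hB : ∀ i, 0 ≤ B i) (hBm : ∀ i, B i ≤ m • 1)
    (hμ : 0 < μ) (hub : ∀ i, ∀ᵐ ω ∂P, m * ξ i ω ≤ μ) (hϱ : 0 < ϱ)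
    (hvar : ∑ i, (m * Var[ξ i; P]) • B i ≤ ϱ • 1) (hr : 0 < r) :
    P.real {ω | ∃ v : n → ℂ, star v ⬝ᵥ v = 1 ∧ r ≤ (star v ⬝ᵥ (∑ i, ξ i ω • B i) *ᵥ v).re} ≤
      Fintype.card n * Real.exp (-(ϱ / μ ^ 2) * hfun (μ * r / ϱ)) := by
  have hpos : 0 < μ * r / ϱ := by positivity
  have hθ : 0 < Real.log (1 + μ * r / ϱ) / μ := div_pos (Real.log_pos (by linarith)) hμ
  refine (matrix_bennett_laplace hξtop hindep hmean hm hB hBm hμ hub hvar hθ).trans_eq ?_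
  congr 2
  rw [div_mul_cancel₀ _ hμ.ne', Real.exp_log (by linarith), hfun]
  field_simp
  ring

end Probability

section Block

variable {s nT Q : ℕ} {Us : Matrix (Fin (nT * Q)) (Fin s) ℂ} {ηL ηU : ℝ}

lemma blockOf_blockIdx (k : Fin nT) (t : Fin Q) : blockOf nT Q (blockIdx nT Q k t) = k := by
  simp [blockOf, blockIdx]

lemma sum_eq_sum_sum_blockIdx {M : Type*} [AddCommMonoid M] (F : Fin (nT * Q) → M) :
    ∑ i, F i = ∑ k, ∑ t, F (blockIdx nT Q k t) := by
  rw [← finProdFinEquiv.sum_comp, Fintype.sum_prod_type]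
  rfl

/-- The energy `∑ ‖uᵢ‖²` of the rows of `Us` with indices in block `k`, so that the paper's `S_k` is
`(P_x / s) * blockEnergy Us k`. -/
noncomputable def blockEnergy (Us : Matrix (Fin (nT * Q)) (Fin s) ℂ) (k : Fin nT) : ℝ :=
  ∑ t, rowNormSq Us (blockIdx nT Q k t)

/-- The Gram matrix `∑ uᵢ uᵢ†` of the rows of `Us` with indices in block `k`. -/
noncomputable def blockGram (Us : Matrix (Fin (nT * Q)) (Fin s) ℂ) (k : Fin nT) :
    Matrix (Fin s) (Fin s) ℂ :=
  (Us.submatrix (blockIdx nT Q k) id)ᴴ * Us.submatrix (blockIdx nT Q k) id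

lemma blockGram_nonneg (k : Fin nT) : 0 ≤ blockGram Us k :=
  (posSemidef_conjTranspose_mul_self _).nonneg

lemma conjTranspose_mul_diagonal_blockOf_mul (Us : Matrix (Fin (nT * Q)) (Fin s) ℂ)
    (p : Fin nT → ℝ) :
    Usᴴ * diagonal (fun i => (p (blockOf nT Q i) : ℂ)) * Us = ∑ k, p k • blockGram Us k := by
  ext a b
  rw [Matrix.mul_apply, Matrix.sum_apply, sum_eq_sum_sum_blockIdx]
  refine sum_congr rfl fun k _ => ?_
  rw [Matrix.smul_apply, blockGram, Matrix.mul_apply, smul_sum]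
  refine sum_congr rfl fun t _ => ?_
  simp only [mul_diagonal, conjTranspose_apply, submatrix_apply, id_eq, Complex.real_smul,
    blockOf_blockIdx]
  ring

lemma sum_blockGram (Us : Matrix (Fin (nT * Q)) (Fin s) ℂ) : ∑ k, blockGram Us k = Usᴴ * Us := by
  simpa using (conjTranspose_mul_diagonal_blockOf_mul Us fun _ => 1).symm

lemma re_trace_blockGram (k : Fin nT) : (blockGram Us k).trace.re = blockEnergy Us k := by
  rw [blockGram, trace_mul_comm]
  simp only [trace, diag_apply, Matrix.mul_apply,
    conjTranspose_apply, submatrix_apply, id_eq, Complex.re_sum, blockEnergy, rowNormSq]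
  refine sum_congr rfl fun t _ => sum_congr rfl fun j _ => ?_
  rw [Complex.star_def, Complex.mul_conj', ← Complex.ofReal_pow, Complex.ofReal_re]

lemma mul_le_blockEnergy (hηL : ∀ i, ηL ≤ rowNormSq Us i) (k : Fin nT) :
    Q * ηL ≤ blockEnergy Us k := by
  simpa [blockEnergy] using card_nsmul_le_sum univ (fun t => rowNormSq Us (blockIdx nT Q k t)) ηL
    fun t _ => hηL _

lemma blockEnergy_le_mul (hηU : ∀ i, rowNormSq Us i ≤ ηU) (k : Fin nT) :
    blockEnergy Us k ≤ Q * ηU := by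
  simpa [blockEnergy] using sum_le_card_nsmul univ (fun t => rowNormSq Us (blockIdx nT Q k t)) ηU
    fun t _ => hηU _

lemma blockEnergy_pos (hQ : 0 < Q) (hηL0 : 0 < ηL) (hηL : ∀ i, ηL ≤ rowNormSq Us i) (k : Fin nT) :
    0 < blockEnergy Us k :=
  (by positivity : 0 < Q * ηL).trans_le (mul_le_blockEnergy hηL k)

lemma blockGram_le_min_smul_one (hUs : Usᴴ * Us = 1) (hηU : ∀ i, rowNormSq Us i ≤ ηU)
    (k : Fin nT) : blockGram Us k ≤ min (Q * ηU) 1 • (1 : Matrix (Fin s) (Fin s) ℂ) := by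
  rcases min_choice (Q * ηU) 1 with hmin | hmin <;> rw [hmin]
  · refine (le_re_trace_smul_one (blockGram_nonneg k)).trans ?_
    rw [re_trace_blockGram]
    gcongr
    exact blockEnergy_le_mul hηU k
  · rw [one_smul, ← hUs, ← sum_blockGram]
    exact single_le_sum (fun k _ => blockGram_nonneg k) (mem_univ k)

lemma sum_smul_blockGram_blockOf (x : Fin (nT * Q) → ℝ) :
    ∑ i, x i • blockGram Us (blockOf nT Q i) =
      ∑ k, (∑ t, x (blockIdx nT Q k t)) • blockGram Us k := by
  simp only [sum_eq_sum_sum_blockIdx (Q := Q), blockOf_blockIdx, sum_smul]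

lemma sum_smul_blockGram_le {a : Fin nT → ℝ} {c : ℝ} (hUs : Usᴴ * Us = 1) (ha : ∀ k, a k ≤ c) :
    ∑ k, a k • blockGram Us k ≤ c • (1 : Matrix (Fin s) (Fin s) ℂ) := by
  rw [← hUs, ← sum_blockGram, smul_sum]
  exact sum_le_sum fun k _ => smul_le_smul_of_nonneg_right (ha k) (blockGram_nonneg k)

lemma smul_one_le_sum_smul_blockGram {a : Fin nT → ℝ} {c : ℝ} (hUs : Usᴴ * Us = 1)
    (ha : ∀ k, c ≤ a k) : c • (1 : Matrix (Fin s) (Fin s) ℂ) ≤ ∑ k, a k • blockGram Us k := by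
  rw [← hUs, ← sum_blockGram, smul_sum]
  exact sum_le_sum fun k _ => smul_le_smul_of_nonneg_right (ha k) (blockGram_nonneg k)

end Block

section Deviation

open scoped ENNReal

variable {s nT Q : ℕ} {Us : Matrix (Fin (nT * Q)) (Fin s) ℂ} {ηL ηU μE : ℝ}

/-- The centred relative harvesting shortfall `1 - E_i / μ_E` per unit of energy of the block
containing `i`. The random matrix `Us† G Us` is, up to scaling, a deterministic matrix minus the sum
of these coefficients times the block Gram matrices. -/
noncomputable def shortfall (Us : Matrix (Fin (nT * Q)) (Fin s) ℂ) (μE : ℝ) (i : Fin (nT * Q))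
    (e : ℝ) : ℝ :=
  (1 - e / μE) / blockEnergy Us (blockOf nT Q i)

lemma shortfall_le (hQ : 0 < Q) (hηL0 : 0 < ηL) (hηL : ∀ i, ηL ≤ rowNormSq Us i) (hμE : 0 < μE)
    (i : Fin (nT * Q)) {e : ℝ} (he : 0 ≤ e) : shortfall Us μE i e ≤ 1 / (Q * ηL) := by
  have : 0 ≤ e / μE := by positivity
  exact div_le_div₀ zero_le_one (by linarith) (by positivity) (mul_le_blockEnergy hηL _)

/- Since `p_k = Ē_k / ((P_x / s) * blockEnergy Us k)`, the sum of the shortfalls over block `k` is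
`Q / blockEnergy Us k - (P_x / (s μ_E)) p_k`, and `blockEnergy Us k ≤ Q η_U`. -/
lemma smul_one_sub_smul_le_sum_shortfall (hUs : Usᴴ * Us = 1) (hs : 0 < s) (hQ : 0 < Q)
    (hηL0 : 0 < ηL) (hηL : ∀ i, ηL ≤ rowNormSq Us i) (hηU : ∀ i, rowNormSq Us i ≤ ηU) {Px : ℝ}
    (hPx : 0 < Px) (hμE : 0 < μE) (e : Fin (nT * Q) → ℝ) :
    (1 / ηU) • (1 : Matrix (Fin s) (Fin s) ℂ) - (Px / s / μE) • ∑ k,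
        ((∑ t, e (blockIdx nT Q k t)) / (Px / s * blockEnergy Us k)) • blockGram Us k ≤
      ∑ i, shortfall Us μE i (e i) • blockGram Us (blockOf nT Q i) := by
  rw [sub_le_iff_le_add, sum_smul_blockGram_blockOf, smul_sum, ← sum_add_distrib]
  simp only [smul_smul, ← add_smul]
  refine smul_one_le_sum_smul_blockGram hUs fun k => ?_
  have hpos := blockEnergy_pos hQ hηL0 hηL k
  have hsum : ∑ t, shortfall Us μE (blockIdx nT Q k t) (e (blockIdx nT Q k t)) +
      Px / s / μE * ((∑ t, e (blockIdx nT Q k t)) / (Px / s * blockEnergy Us k)) =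
        Q / blockEnergy Us k := by
    simp only [shortfall, blockOf_blockIdx, ← sum_div, sum_sub_distrib, sum_const, card_univ,
      Fintype.card_fin, nsmul_eq_mul, mul_one]
    field_simp
    ring
  rw [hsum, div_le_div_iff₀ ?_ hpos, one_mul]
  · exact blockEnergy_le_mul hηU k
  · exact pos_of_mul_pos_right (hpos.trans_le (blockEnergy_le_mul hηU k)) (Nat.cast_nonneg Q)

lemma exists_unit_le_re_dotProduct_sum_shortfall (hUs : Usᴴ * Us = 1) (hs : 0 < s) (hQ : 0 < Q)
    (hηL0 : 0 < ηL) (hηL : ∀ i, ηL ≤ rowNormSq Us i) (hηU : ∀ i, rowNormSq Us i ≤ ηU) {Px : ℝ}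
    (hPx : 0 < Px) (hμE : 0 < μE) {e : Fin (nT * Q) → ℝ} {A : Matrix (Fin s) (Fin s) ℂ}
    (hA : A.IsHermitian)
    (hAe : A = ∑ k, ((∑ t, e (blockIdx nT Q k t)) / (Px / s * blockEnergy Us k)) • blockGram Us k)
    {r : ℝ} (hle : ⨅ j, hA.eigenvalues j ≤ μE * (s / Px) * (1 / ηU - r)) :
    ∃ v : Fin s → ℂ, star v ⬝ᵥ v = 1 ∧
      r ≤ (star v ⬝ᵥ (∑ i, shortfall Us μE i (e i) • blockGram Us (blockOf nT Q i)) *ᵥ v).re := by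
  have : Nonempty (Fin s) := ⟨⟨0, hs⟩⟩
  obtain ⟨v, hv, hvA⟩ := exists_unit_re_dotProduct_eq_iInf_eigenvalues hA
  refine ⟨v, hv, le_trans ?_ (re_dotProduct_mulVec_mono
    (smul_one_sub_smul_le_sum_shortfall hUs hs hQ hηL0 hηL hηU hPx hμE e) v)⟩
  rw [← hAe]
  simp only [sub_mulVec, smul_mulVec, one_mulVec, dotProduct_sub, dotProduct_smul, hv,
    Complex.sub_re, Complex.smul_re, Complex.one_re, smul_eq_mul, mul_one, hvA]
  have hscale : Px / s / μE * ⨅ j, hA.eigenvalues j ≤ 1 / ηU - r := by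
    calc Px / s / μE * ⨅ j, hA.eigenvalues j
        ≤ Px / s / μE * (μE * (s / Px) * (1 / ηU - r)) := by gcongr
      _ = 1 / ηU - r := by field_simp
  linarith

variable {Ω : Type*} [MeasurableSpace Ω] {P : Measure Ω} {e : Ω → ℝ}

lemma memLp_shortfall [IsFiniteMeasure P] {p : ℝ≥0∞} (he : MemLp e p P) (i : Fin (nT * Q)) :
    MemLp (fun ω => shortfall Us μE i (e ω)) p P := by
  simp only [shortfall, div_eq_mul_inv _ (blockEnergy _ _), div_eq_mul_inv _ μE]
  exact ((memLp_const 1).sub (he.mul_const _)).mul_const _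

variable [IsProbabilityMeasure P]

lemma integral_shortfall (he : Integrable e P) (hμE : 0 < μE) (hmean : ∫ ω, e ω ∂P = μE)
    (i : Fin (nT * Q)) : ∫ ω, shortfall Us μE i (e ω) ∂P = 0 := by
  simp only [shortfall]
  rw [integral_div, integral_sub (integrable_const 1) (he.div_const μE), integral_div, hmean,
    div_self hμE.ne']
  simp

lemma variance_shortfall (he : AEStronglyMeasurable e P) (i : Fin (nT * Q)) :
    Var[fun ω => shortfall Us μE i (e ω); P] =
      Var[e; P] / (μE * blockEnergy Us (blockOf nT Q i)) ^ 2 := by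
  simp only [shortfall, div_eq_mul_inv _ (blockEnergy _ _), div_eq_mul_inv _ μE]
  rw [variance_mul_const, variance_const_sub (he.mul_const _), variance_mul_const]
  field_simp

lemma sum_smul_variance_shortfall_le (hUs : Usᴴ * Us = 1) (hQ : 0 < Q) (hηL0 : 0 < ηL)
    (hηL : ∀ i, ηL ≤ rowNormSq Us i) (hμE : 0 < μE) {E : Fin (nT * Q) → Ω → ℝ}
    (hE : ∀ i, AEStronglyMeasurable (E i) P) {ϱE : ℝ} (hvar : ∀ i, Var[E i; P] ≤ ϱE) {m : ℝ}
    (hm : 0 ≤ m) :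
    ∑ i, (m * Var[fun ω => shortfall Us μE i (E i ω); P]) • blockGram Us (blockOf nT Q i) ≤
      (ϱE / μE ^ 2 * (1 / ηL ^ 2) * (1 / Q) * m) • (1 : Matrix (Fin s) (Fin s) ℂ) := by
  rw [sum_smul_blockGram_blockOf]
  refine sum_smul_blockGram_le hUs fun k => ?_
  calc ∑ t, m * Var[fun ω => shortfall Us μE (blockIdx nT Q k t) (E (blockIdx nT Q k t) ω); P]
      ≤ ∑ _t : Fin Q, m * (ϱE / (μE * (Q * ηL)) ^ 2) := by
        refine sum_le_sum fun t _ => mul_le_mul_of_nonneg_left ?_ hm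
        rw [variance_shortfall (hE _)]
        have hϱE : 0 ≤ ϱE := (variance_nonneg _ P).trans (hvar (blockIdx nT Q k t))
        gcongr
        · exact hvar _
        · exact mul_le_blockEnergy hηL _
    _ = ϱE / μE ^ 2 * (1 / ηL ^ 2) * (1 / Q) * m := by
        rw [sum_const, card_univ, Fintype.card_fin, nsmul_eq_mul]
        field_simp

theorem measureReal_exists_le_re_dotProduct_sum_shortfall_le (hUs : Usᴴ * Us = 1) (hQ : 0 < Q)
    (hηL0 : 0 < ηL) (hηL : ∀ i, ηL ≤ rowNormSq Us i) (hηU0 : 0 < ηU)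
    (hηU : ∀ i, rowNormSq Us i ≤ ηU) (hμE : 0 < μE) {E : Fin (nT * Q) → Ω → ℝ}
    (hE : ∀ i, MemLp (E i) ∞ P) (hindep : iIndepFun E P) (hE0 : ∀ i, 0 ≤ᵐ[P] E i)
    (hmean : ∀ i, ∫ ω, E i ω ∂P = μE) {ϱE : ℝ} (hϱE : 0 < ϱE) (hvar : ∀ i, Var[E i; P] ≤ ϱE)
    {μI ϱI r : ℝ} (hμI : min (Q * ηU) 1 / (Q * ηL) ≤ μI)
    (hϱI : ϱE / μE ^ 2 * (1 / ηL ^ 2) * (1 / Q) * min (Q * ηU) 1 ≤ ϱI) (hr : 0 < r) :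
    P.real {ω | ∃ v : Fin s → ℂ, star v ⬝ᵥ v = 1 ∧ r ≤ (star v ⬝ᵥ
        (∑ i, shortfall Us μE i (E i ω) • blockGram Us (blockOf nT Q i)) *ᵥ v).re} ≤
      s * Real.exp (-(ϱI / μI ^ 2) * hfun (μI * r / ϱI)) := by
  have hm : 0 < min (Q * ηU) 1 := by positivity
  have hub (i : Fin (nT * Q)) : ∀ᵐ ω ∂P, min (Q * ηU) 1 * shortfall Us μE i (E i ω) ≤ μI := by
    filter_upwards [hE0 i] with ω hω
    refine le_trans ?_ hμI
    rw [← mul_one_div]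
    gcongr
    exact shortfall_le hQ hηL0 hηL hμE i hω
  have hvarsum := sum_smul_variance_shortfall_le hUs hQ hηL0 hηL hμE
    (fun i => (hE i).aestronglyMeasurable) hvar hm.le
  have hindep' : iIndepFun (fun i ω => shortfall Us μE i (E i ω)) P :=
    hindep.comp (fun i x => shortfall Us μE i x) fun i => by unfold shortfall; fun_prop
  have := matrix_bennett (fun i => memLp_shortfall (hE i) i) hindep'
    (fun i => integral_shortfall ((hE i).integrable le_top) hμE (hmean i) i) hm
    (fun i => blockGram_nonneg (blockOf nT Q i))
    (fun i => blockGram_le_min_smul_one hUs hηU (blockOf nT Q i))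
    (lt_of_lt_of_le (by positivity) hμI) hub (lt_of_lt_of_le (by positivity) hϱI)
    (hvarsum.trans (smul_le_smul_of_nonneg_right hϱI zero_le_one)) hr
  rwa [Fintype.card_fin] at this

end Deviation

lemma div_natCast_mul_le_one_div_mul_max_mul {Q : ℕ} (hQ : 0 < Q) {η m : ℝ} (hη : 0 < η)
    (hm : 0 ≤ m) (a : ℝ) : m / (Q * η) ≤ 1 / η * max a 1 * m := by
  have hQ1 : (1 : ℝ) ≤ Q := by exact_mod_cast hQ
  calc m / (Q * η) ≤ m / (1 * η) := by gcongr
    _ = 1 / η * 1 * m := by ring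
    _ ≤ 1 / η * max a 1 * m := by
        gcongr
        exact le_max_right a 1

theorem stmt_15_general {Ω : Type*} [MeasurableSpace Ω] {P : Measure Ω} [IsProbabilityMeasure P]
    {s nT Q : ℕ} (hs : 0 < s) (hnT : 0 < nT) (hQ : 0 < Q)
    {Us : Matrix (Fin (nT * Q)) (Fin s) ℂ} (hUs : Usᴴ * Us = 1)
    {ηL ηU : ℝ} (hηLpos : 0 < ηL) (hηL : ∀ i, ηL ≤ rowNormSq Us i)
    (hηU : ∀ i, rowNormSq Us i ≤ ηU) {Px : ℝ} (hPx : 0 < Px)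
    {μE ϱE : ℝ} (hμE : 0 < μE) (hϱE : 0 < ϱE) {E : Fin (nT * Q) → Ω → ℝ}
    (hE : ∀ i, MemLp (E i) ⊤ P) (hindep : iIndepFun E P) (hE0 : ∀ i, 0 ≤ᵐ[P] E i)
    (hmean : ∀ i, ∫ ω, E i ω ∂P = μE) (hvar : ∀ i, Var[E i; P] ≤ ϱE)
    {S : Fin nT → ℝ} (hS : ∀ k, S k = ∑ t, Px / s * rowNormSq Us (blockIdx nT Q k t))
    {p : Fin nT → Ω → ℝ} (hp : ∀ k ω, p k ω = (∑ t, E (blockIdx nT Q k t) ω) / S k)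
    {G : Ω → Matrix (Fin (nT * Q)) (Fin (nT * Q)) ℂ}
    (hG : ∀ ω, G ω = diagonal fun i => (p (blockOf nT Q i) ω : ℂ))
    (hHerm : ∀ ω, (Usᴴ * G ω * Us).IsHermitian) {r μI ϱI : ℝ} (hr : 0 < r)
    (hμI : min (Q * ηU) 1 / (Q * ηL) ≤ μI)
    (hϱI : ϱE / μE ^ 2 * (1 / ηL ^ 2) * (1 / Q) * min (Q * ηU) 1 ≤ ϱI) :
    ENNReal.ofReal (1 - s * Real.exp (-(ϱI / μI ^ 2) * hfun (μI * r / ϱI))) ≤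
      P {ω | μE * (s / Px) * (1 / ηU - r) < ⨅ i, (hHerm ω).eigenvalues i} := by
  have hηU0 : 0 < ηU :=
    let i : Fin (nT * Q) := ⟨0, Nat.mul_pos hnT hQ⟩
    hηLpos.trans_le ((hηL i).trans (hηU i))
  have hgram (ω : Ω) : Usᴴ * G ω * Us = ∑ k,
      ((∑ t, E (blockIdx nT Q k t) ω) / (Px / s * blockEnergy Us k)) • blockGram Us k := by
    rw [hG, conjTranspose_mul_diagonal_blockOf_mul Us fun k => p k ω]
    simp only [hp, hS, blockEnergy, mul_sum]
  have hbad := measureReal_exists_le_re_dotProduct_sum_shortfall_le hUs hQ hηLpos hηL hηU0 hηU hμE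
    hE hindep hE0 hmean hϱE hvar hμI hϱI hr
  refine ofReal_one_sub_le_measure (fun ω hω => ?_) hbad
  exact exists_unit_le_re_dotProduct_sum_shortfall hUs hs hQ hηLpos hηL hηU hPx hμE
    (e := fun i => E i ω) (hHerm ω) (hgram ω) (not_lt.1 hω)

/-- Smallest-eigenvalue bound for the energy-harvesting block-transmission model: for every
`r ∈ (0, 1/η_U]`,
`P(λ_min(Us† G Us) > μ_E·(s/P_x)·(1/η_U − r)) ≥ 1 − f_bt(μ_I, ϱ_I, r)` with
`μ_I = (1/η_L)·max{r_E − 1, 1}·min{Q·η_U, 1}` and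
`ϱ_I = (ϱ_E/μ_E²)·(1/η_L²)·(1/Q)·min{Q·η_U, 1}`. -/
theorem stmt_15
    {Ω : Type} [MeasureSpace Ω] [IsProbabilityMeasure (ℙ : Measure Ω)]
    (s nT Q : ℕ) (hs : 0 < s) (hnT : 0 < nT) (hQ : 0 < Q) (hsN : s ≤ nT * Q)
    (Us : Matrix (Fin (nT * Q)) (Fin s) ℂ) (hUs : Usᴴ * Us = 1)
    (ηL ηU : ℝ) (hηL : ηL = ⨅ i, rowNormSq Us i) (hηU : ηU = ⨆ i, rowNormSq Us i)
    (hηLpos : 0 < ηL)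
    (Px : ℝ) (hPx : 0 < Px)
    (μE ϱE rE : ℝ) (hμE : 0 < μE) (hϱE : 0 < ϱE) (hrE : 1 ≤ rE)
    (E : Fin (nT * Q) → Ω → ℝ) (hEmeas : ∀ i, Measurable (E i))
    (hindep : iIndepFun E ℙ)
    (hident : ∀ i j, IdentDistrib (E i) (E j) ℙ ℙ)
    (hmean : ∀ i, ∫ ω, E i ω = μE)
    (hvar : ∀ i, variance (E i) ℙ = ϱE)
    (hbdd : ∀ i, ∀ᵐ ω, 0 ≤ E i ω ∧ E i ω ≤ rE * μE)
    (S : Fin nT → ℝ)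
    (hS : ∀ k, S k = ∑ t : Fin Q, Px / s * rowNormSq Us (blockIdx nT Q k t))
    (p : Fin nT → Ω → ℝ)
    (hp : ∀ k ω, p k ω = (∑ t : Fin Q, E (blockIdx nT Q k t) ω) / S k)
    (G : Ω → Matrix (Fin (nT * Q)) (Fin (nT * Q)) ℂ)
    (hG : ∀ ω, G ω = Matrix.diagonal fun i => ((p (blockOf nT Q i) ω : ℝ) : ℂ))
    (hHerm : ∀ ω, (Usᴴ * G ω * Us).IsHermitian)
    (r : ℝ) (hr0 : 0 < r) (hr1 : r ≤ 1 / ηU)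
    (μI ϱI : ℝ)
    (hμI : μI = 1 / ηL * max (rE - 1) 1 * min (Q * ηU) 1)
    (hϱI : ϱI = ϱE / μE ^ 2 * (1 / ηL ^ 2) * (1 / Q) * min (Q * ηU) 1) :
    ENNReal.ofReal (1 - fbt s μI ϱI r) ≤
      ℙ {ω | μE * (s / Px) * (1 / ηU - r) < ⨅ i, (hHerm ω).eigenvalues i} := by
  have hE (i : Fin (nT * Q)) : MemLp (E i) ⊤ ℙ := by
    refine memLp_top_of_bound (hEmeas i).aestronglyMeasurable (rE * μE) ?_
    exact (hbdd i).mono fun ω hω => (Real.norm_of_nonneg hω.1).trans_le hω.2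
  have hηL' (i : Fin (nT * Q)) : ηL ≤ rowNormSq Us i :=
    hηL ▸ ciInf_le (Set.finite_range _).bddBelow i
  have hηU' (i : Fin (nT * Q)) : rowNormSq Us i ≤ ηU :=
    hηU ▸ le_ciSup (Set.finite_range _).bddAbove i
  have hμI' : min (Q * ηU) 1 / (Q * ηL) ≤ μI := by
    have hηU0 : 0 ≤ ηU := hηU ▸ Real.iSup_nonneg fun i => by unfold rowNormSq; positivity
    exact hμI ▸ div_natCast_mul_le_one_div_mul_max_mul hQ hηLpos (by positivity) (rE - 1)
  refine (ENNReal.ofReal_le_ofReal ?_).trans (stmt_15_general hs hnT hQ hUs hηLpos hηL' hηU' hPx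
    hμE hϱE hE hindep (fun i => (hbdd i).mono fun _ hω => hω.1) hmean (fun i => (hvar i).le) hS hp
    hG hHerm hr0 hμI' hϱI.ge)
  unfold fbt
  linarith [show 0 ≤ s * Real.exp (-(ϱI / μI ^ 2) * hfun (μI * r / ϱI)) by positivity]
end
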